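/- arXiv:1905.09999 — 3 statements merged into one kernel-verified Lean document; each statement's English description precedes it below -/
import Mathlib

section
/- Let f : [−1, 1] → ℝ be continuous and suppose there exists δ > 0 such that f is nonincreasing on [−1, −1+δ] and nonincreasing on [1−δ, 1]. Let u ∈ L_{2s} ∩ C^{1,1}_loc(ℝ^n) satisfy (-Δ)^s u(x) = f(u(x)) for all x ∈ ℝ^n, |u(x)| ≤ 1 for all x ∈ ℝ^n, and u(x', x_n) → ±1 as x_n → ±∞, uniformly in x' ∈ ℝ^{n−1}. Then u is strictly increasing with respect to x_n: for every τ > 0 and every x = (x', x_n) ∈ ℝ^n, u(x', x_n + τ) > u(x', x_n). -/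
open MeasureTheory Filter Metric Set

noncomputable section

/-- Points of ℝⁿ with the Euclidean norm. -/
abbrev Pt (n : ℕ) := EuclideanSpace ℝ (Fin n)

/-- The space `L_{2s}`: locally integrable functions `u` with
`∫ |u(x)|/(1+|x|^{n+2s}) dx < ∞`. -/
def MemL2s (n : ℕ) (s : ℝ) (u : Pt n → ℝ) : Prop :=
  LocallyIntegrable u volume ∧
    Integrable (fun x : Pt n => |u x| / (1 + ‖x‖ ^ ((n : ℝ) + 2 * s))) volume

/-- `u` is locally `C^{1,1}` on the open set `D`. -/
def C11loc (n : ℕ) (u : Pt n → ℝ) (D : Set (Pt n)) : Prop :=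
  ∀ x ∈ D, ∃ ε > 0, ball x ε ⊆ D ∧ DifferentiableOn ℝ u (ball x ε) ∧
    ∃ K : NNReal, LipschitzOnWith K (fun y => fderivWithin ℝ u (ball x ε) y) (ball x ε)

/-- `(-Δ)^s u (x) = L`, with the principal value defined as the limit, as `ε → 0⁺`, of
`C_{n,s} ∫_{ℝⁿ \ B_ε(x)} (u(x) - u(y))/|x-y|^{n+2s} dy`. -/
def HasFracLap (n : ℕ) (s Cns : ℝ) (u : Pt n → ℝ) (x : Pt n) (L : ℝ) : Prop :=
  Tendsto (fun ε : ℝ =>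
      Cns * ∫ y in {y : Pt n | ε ≤ dist x y}, (u x - u y) / dist x y ^ ((n : ℝ) + 2 * s))
    (nhdsWithin 0 (Set.Ioi 0)) (nhds L)

/-- The index of the last coordinate (`x_n`). -/
def lastIdx (n : ℕ) (hn : 0 < n) : Fin n := ⟨n - 1, Nat.sub_lt hn Nat.one_pos⟩

/-- The unit vector `e_n` in the `x_n` direction. -/
def eN (n : ℕ) (hn : 0 < n) : Pt n := EuclideanSpace.single (lastIdx n hn) 1

/-!
Write `w_v(x) = u(x + v) - u(x)` and let `ℓ` be the coordinate in which `u` has limits `±1`. If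
`w_v` is close to its infimum `a` at `x₀`, then subtracting a small bump produces a minimum at a
nearby point `y`. The equation at `y` bounds the means of `w_v - a` over balls away from `y` by
`f(u(y)) - f(u(y + v))`, up to a factor and a small error. Along an arithmetic progression of step
`v` the means of `w_v` telescope to the difference of two means of `u`, which is at least `-2`.
Hence:

* if `a < 0`, then `f(u(y + v)) < f(u(y))` at some such `y`, so that `y` lies in a fixed slab
  `|ℓ| ≤ M`, since `f` is nonincreasing near `±1`;
* `u(x + tv) ≥ u(x) - κ` for a suitable `t > 0`, because the factor is small on small scales;
* on the slab, `w_v - a` is bounded below by a positive constant when `a ≤ 0` is close to `0`,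
  because the means of `u` increase by at least `1` across the slab.

So `w_v ≥ 0` for large `v`, and this persists as `v` slides down to any vector with `ℓ(v) > 0`; the
last item with `a = 0` makes the inequality strict.
-/

open Module Topology

section Kernel

lemma measurableSet_le_norm {E : Type*} [NormedAddCommGroup E] [MeasurableSpace E]
    [OpensMeasurableSpace E] (ε : ℝ) : MeasurableSet {z : E | ε ≤ ‖z‖} :=
  measurableSet_le measurable_const measurable_norm

variable {E : Type*} [NormedAddCommGroup E] [NormedSpace ℝ E] [FiniteDimensional ℝ E]
  [MeasurableSpace E] [BorelSpace E] {μ : Measure E} [μ.IsAddHaarMeasure] {p : ℝ}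

lemma integrableOn_div_norm_rpow (hp : finrank ℝ E < p) {F : E → ℝ} (hF : Measurable F) {B : ℝ}
    (hB : ∀ z, |F z| ≤ B) {ε : ℝ} (hε : 0 < ε) :
    IntegrableOn (fun z ↦ F z / ‖z‖ ^ p) {z | ε ≤ ‖z‖} μ := by
  have hp0 : 0 < p := (Nat.cast_nonneg _).trans_lt hp
  have hdom : Integrable (fun z : E ↦ B * (ε⁻¹ + 1) ^ p * (1 + ‖z‖) ^ (-p)) μ :=
    (integrable_one_add_norm hp).const_mul _
  refine hdom.integrableOn.mono' (hF.div (measurable_norm.pow_const p)).aestronglyMeasurable ?_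
  filter_upwards [ae_restrict_mem (measurableSet_le_norm ε)] with z hz
  have hz0 : 0 < ‖z‖ := hε.trans_le hz
  have hone : 1 + ‖z‖ ≤ (ε⁻¹ + 1) * ‖z‖ := by
    have : 1 ≤ ε⁻¹ * ‖z‖ := by rwa [inv_mul_eq_div, one_le_div hε]
    linarith
  have hpow : (1 + ‖z‖) ^ p ≤ (ε⁻¹ + 1) ^ p * ‖z‖ ^ p := by
    rw [← Real.mul_rpow (by positivity) hz0.le]
    gcongr
  have hB0 : 0 ≤ B := (abs_nonneg _).trans (hB z)
  rw [Real.norm_eq_abs, abs_div, abs_of_pos (Real.rpow_pos_of_pos hz0 p),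
    Real.rpow_neg (by positivity), ← div_eq_mul_inv,
    div_le_div_iff₀ (by positivity) (by positivity)]
  calc |F z| * (1 + ‖z‖) ^ p ≤ B * ((ε⁻¹ + 1) ^ p * ‖z‖ ^ p) := by gcongr; exact hB z
    _ = B * (ε⁻¹ + 1) ^ p * ‖z‖ ^ p := (mul_assoc ..).symm

lemma integrable_min_sq_one_div_norm_rpow [Nontrivial E]
    (hp : p ∈ Ioo (finrank ℝ E : ℝ) (finrank ℝ E + 2)) :
    Integrable (fun z : E ↦ min (‖z‖ ^ 2) 1 / ‖z‖ ^ p) μ := by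
  rw [← integrableOn_univ, ← union_compl_self (ball (0 : E) 1), integrableOn_union]
  constructor
  · rw [integrableOn_fun_norm_addHaar μ (f := fun r ↦ min (r ^ 2) 1 / r ^ p)]
    have hrpow : IntegrableOn (fun r : ℝ ↦ r ^ (finrank ℝ E + 1 - p)) (Ioo 0 1) :=
      (intervalIntegral.integrableOn_Ioo_rpow_iff one_pos).2 (by linarith [hp.2])
    refine hrpow.congr_fun (fun r hr ↦ ?_) measurableSet_Ioo
    have hmin : min (r ^ 2) 1 = r ^ 2 := min_eq_left (pow_le_one₀ hr.1.le hr.2.le)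
    have hdim : finrank ℝ E - 1 + 2 = finrank ℝ E + 1 := by
      have := finrank_pos (R := ℝ) (M := E)
      omega
    beta_reduce
    rw [smul_eq_mul, hmin, ← mul_div_assoc, ← pow_add, hdim, Real.rpow_sub hr.1, ← Nat.cast_add_one,
      Real.rpow_natCast]
  · have hshell : (ball (0 : E) 1)ᶜ = {z | 1 ≤ ‖z‖} := by ext z; simp
    rw [hshell]
    refine integrableOn_div_norm_rpow hp.1 (by fun_prop) (B := 1) (fun z ↦ ?_) one_pos
    rw [abs_of_nonneg (by positivity)]
    exact min_le_right _ _

end Kernel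

section PrincipalValue

lemma setIntegral_comp_neg {G H : Type*} [NormedAddCommGroup H] [NormedSpace ℝ H]
    [MeasurableSpace G] [InvolutiveNeg G] [MeasurableNeg G] {μ : Measure G} [μ.IsNegInvariant]
    {s : Set G} (hs : -s = s) (F : G → H) :
    ∫ x in s, F (-x) ∂μ = ∫ x in s, F x ∂μ := by
  conv_rhs => rw [← (Measure.measurePreserving_neg μ).setIntegral_preimage_emb
    (MeasurableEquiv.neg G).measurableEmbedding F s]
  rw [Set.neg_preimage, hs]

variable {E : Type*} [NormedAddCommGroup E] [InnerProductSpace ℝ E] [FiniteDimensional ℝ E]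
  [MeasurableSpace E] [BorelSpace E] {p : ℝ}

variable (E p) in
/-- The mass `∫ min(|z|², 1) / |z|^p dz` of the kernel `|z|^{-p}`, finite for `d < p < d + 2`;
it bounds the singular integrals of the unit bumps used as perturbations. -/
def levyMass : ℝ := ∫ z : E, min (‖z‖ ^ 2) 1 / ‖z‖ ^ p

/-- `PV ∫ (u(x) - u(x + z)) / |z|^p dz = L`, the principal value being the limit over `{ε ≤ |z|}`.
For `p = d + 2s` this is `(-Δ)^s u(x)` up to the normalizing constant. -/
def HasPVIntegral (p : ℝ) (u : E → ℝ) (x : E) (L : ℝ) : Prop :=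
  Tendsto (fun ε : ℝ ↦ ∫ z in {z : E | ε ≤ ‖z‖}, (u x - u (x + z)) / ‖z‖ ^ p) (𝓝[>] 0) (𝓝 L)

lemma HasPVIntegral.comp_add_right {u : E → ℝ} {x v : E} {L : ℝ}
    (h : HasPVIntegral p u (x + v) L) : HasPVIntegral p (fun y ↦ u (y + v)) x L := by
  simpa only [HasPVIntegral, add_right_comm x v] using h

lemma HasPVIntegral.sub (hp : finrank ℝ E < p) {u v : E → ℝ} {x : E} {L M B : ℝ}
    (hu : HasPVIntegral p u x L) (hv : HasPVIntegral p v x M) (hum : Measurable u)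
    (hvm : Measurable v) (huB : ∀ y, |u y| ≤ B) (hvB : ∀ y, |v y| ≤ B) :
    HasPVIntegral p (u - v) x (L - M) := by
  have hint {w : E → ℝ} (hw : Measurable w) (hwB : ∀ y, |w y| ≤ B) {ε : ℝ} (hε : 0 < ε) :
      IntegrableOn (fun z ↦ (w x - w (x + z)) / ‖z‖ ^ p) {z | ε ≤ ‖z‖} :=
    integrableOn_div_norm_rpow hp (by fun_prop)
      (fun z ↦ (abs_sub _ _).trans (add_le_add (hwB _) (hwB _))) hε
  refine (Tendsto.sub hu hv).congr' ?_
  filter_upwards [self_mem_nhdsWithin] with ε hε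
  rw [← integral_sub (hint hum huB hε) (hint hvm hvB hε)]
  congr with z
  simp only [Pi.sub_apply]
  ring

end PrincipalValue

section BallAverage

variable {E : Type*} [NormedAddCommGroup E] [InnerProductSpace ℝ E] [FiniteDimensional ℝ E]
  [MeasurableSpace E] [BorelSpace E] {p ρ : ℝ} {u : E → ℝ}

/-- The mean of `u` over the ball of radius `ρ` about `x`. -/
def ballAverage (ρ : ℝ) (u : E → ℝ) (x : E) : ℝ := ⨍ z in ball x ρ, u z

lemma integrableOn_ball_of_continuous (hu : Continuous u) (x : E) (ρ : ℝ) :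
    IntegrableOn u (ball x ρ) :=
  (hu.continuousOn.integrableOn_compact (isCompact_closedBall x ρ)).mono_set ball_subset_closedBall

lemma ballAverage_mem (hρ : 0 < ρ) (hu : Continuous u) {x : E} {t : Set ℝ} (ht : Convex ℝ t)
    (htc : IsClosed t) (h : ∀ z ∈ ball x ρ, u z ∈ t) : ballAverage ρ u x ∈ t :=
  ht.set_average_mem htc (measure_ball_pos _ _ hρ).ne' measure_ball_lt_top.ne
    ((ae_restrict_mem measurableSet_ball).mono h) (integrableOn_ball_of_continuous hu x ρ)

lemma ballAverage_le (hρ : 0 < ρ) (hu : Continuous u) {x : E} {b : ℝ}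
    (h : ∀ z ∈ ball x ρ, u z ≤ b) : ballAverage ρ u x ≤ b :=
  ballAverage_mem hρ hu (convex_Iic b) isClosed_Iic h

lemma le_ballAverage (hρ : 0 < ρ) (hu : Continuous u) {x : E} {a : ℝ}
    (h : ∀ z ∈ ball x ρ, a ≤ u z) : a ≤ ballAverage ρ u x :=
  ballAverage_mem hρ hu (convex_Ici a) isClosed_Ici h

lemma ballAverage_sub {v : E → ℝ} (hu : Continuous u) (hv : Continuous v) (ρ : ℝ) (x : E) :
    ballAverage ρ (u - v) x = ballAverage ρ u x - ballAverage ρ v x := by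
  simp only [ballAverage, setAverage_eq, Pi.sub_apply, smul_eq_mul, ← mul_sub]
  rw [integral_sub (integrableOn_ball_of_continuous hu x ρ)
    (integrableOn_ball_of_continuous hv x ρ)]

lemma ballAverage_comp_add_left (ρ : ℝ) (u : E → ℝ) (y x : E) :
    ballAverage ρ (fun z ↦ u (y + z)) x = ballAverage ρ u (y + x) := by
  have := (measurePreserving_add_left (volume : Measure E) y).setIntegral_preimage_emb
    (measurableEmbedding_addLeft y) u (ball (y + x) ρ)
  rw [preimage_add_ball, add_sub_cancel_left] at this
  simp only [ballAverage, setAverage_eq, this, Measure.addHaar_real_ball_center volume x,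
    Measure.addHaar_real_ball_center volume (y + x)]

lemma ballAverage_comp_add_right (ρ : ℝ) (u : E → ℝ) (x v : E) :
    ballAverage ρ (fun z ↦ u (z + v)) x = ballAverage ρ u (x + v) := by
  simpa only [add_comm] using ballAverage_comp_add_left ρ u v x

lemma ballAverage_add_nsmul_sub (hu : Continuous u) (ρ : ℝ) (x v : E) (N : ℕ) :
    ballAverage ρ u (x + N • v) - ballAverage ρ u x =
      ∑ j ∈ Finset.range N, ballAverage ρ ((fun z ↦ u (z + v)) - u) (x + j • v) := by
  have := Finset.sum_range_sub (fun j : ℕ ↦ ballAverage ρ u (x + j • v)) N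
  rw [zero_smul, add_zero] at this
  rw [← this]
  refine Finset.sum_congr rfl fun j _ ↦ ?_
  rw [ballAverage_sub (by fun_prop) hu, ballAverage_comp_add_right, add_assoc, succ_nsmul]

variable (E) in
/-- The ratio of the bound `R^p` for `|z|^p` on `B_R(0)` to the volume of a ball of radius `ρ`: the
factor by which `∫ F(z) / |z|^p dz`, for `F ≥ 0`, bounds the means of `F` over balls of radius `ρ`
in `B_R(0) \ {0}`. -/
def averageFactor (p ρ R : ℝ) : ℝ := R ^ p / volume.real (ball (0 : E) ρ)

lemma averageFactor_nonneg {R : ℝ} (hR : 0 ≤ R) : 0 ≤ averageFactor E p ρ R := by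
  unfold averageFactor
  positivity

lemma ballAverage_le_averageFactor_mul (hp : 0 ≤ p) (hρ : 0 < ρ) {F : E → ℝ}
    (hF0 : ∀ z, 0 ≤ F z) {ε : ℝ} (hε : 0 < ε)
    (hF : IntegrableOn (fun z ↦ F z / ‖z‖ ^ p) {z | ε ≤ ‖z‖}) {c : E} {R : ℝ}
    (hρε : ρ + ε ≤ ‖c‖) (hR : ‖c‖ + ρ ≤ R) :
    ballAverage ρ F c ≤ averageFactor E p ρ R * ∫ z in {z : E | ε ≤ ‖z‖}, F z / ‖z‖ ^ p := by
  have hnorm : ∀ z ∈ ball c ρ, ε ≤ ‖z‖ ∧ ‖z‖ ≤ R := fun z hz ↦ by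
    rw [mem_ball, dist_eq_norm] at hz
    have hlower := norm_sub_norm_le c z
    have hupper := norm_sub_norm_le z c
    rw [norm_sub_rev] at hlower
    constructor <;> linarith
  have hsub : ball c ρ ⊆ {z | ε ≤ ‖z‖} := fun z hz ↦ (hnorm z hz).1
  have hR0 : 0 < R := by linarith
  have hball : ∫ z in ball c ρ, F z ≤ R ^ p * ∫ z in {z : E | ε ≤ ‖z‖}, F z / ‖z‖ ^ p := by
    calc ∫ z in ball c ρ, F z ≤ ∫ z in ball c ρ, R ^ p * (F z / ‖z‖ ^ p) := by
          refine integral_mono_of_nonneg (.of_forall hF0) ((hF.mono_set hsub).const_mul _) ?_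
          filter_upwards [ae_restrict_mem measurableSet_ball] with z hz
          obtain ⟨hεz, hzR⟩ := hnorm z hz
          have hz0 : 0 < ‖z‖ := hε.trans_le hεz
          calc F z = ‖z‖ ^ p * (F z / ‖z‖ ^ p) := by field_simp
            _ ≤ R ^ p * (F z / ‖z‖ ^ p) := by
              have := hF0 z
              gcongr
      _ = R ^ p * ∫ z in ball c ρ, F z / ‖z‖ ^ p := integral_const_mul _ _
      _ ≤ R ^ p * ∫ z in {z : E | ε ≤ ‖z‖}, F z / ‖z‖ ^ p := by
          gcongr
          exact .of_forall fun z ↦ div_nonneg (hF0 z) (by positivity)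
  rw [ballAverage, setAverage_eq, Measure.addHaar_real_ball_center, averageFactor, smul_eq_mul,
    div_mul_eq_mul_div, inv_mul_eq_div]
  gcongr

lemma exists_averageFactor_le (hp : finrank ℝ E < p) {η : ℝ} (hη : 0 < η) :
    ∃ r > 0, averageFactor E p (r / 2) (3 * r) ≤ η := by
  set C := 3 ^ p * 2 ^ finrank ℝ E / volume.real (ball (0 : E) 1)
  have hscale : ∀ r : ℝ, 0 < r →
      averageFactor E p (r / 2) (3 * r) = C * r ^ (p - finrank ℝ E) := fun r hr ↦ by
    have hvolume : volume.real (ball (0 : E) (r / 2)) =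
        (r / 2) ^ finrank ℝ E * volume.real (ball (0 : E) 1) := by
      rw [measureReal_def, Measure.addHaar_ball_of_pos _ _ (by positivity), ENNReal.toReal_mul,
        ENNReal.toReal_ofReal (by positivity), measureReal_def]
    have hball : 0 < volume.real (ball (0 : E) 1) :=
      ENNReal.toReal_pos (measure_ball_pos _ _ one_pos).ne' measure_ball_lt_top.ne
    rw [averageFactor, hvolume, Real.mul_rpow (by norm_num) hr.le, Real.rpow_sub hr,
      Real.rpow_natCast, div_pow]
    simp only [C]
    field_simp
  have hlim : Tendsto (fun r : ℝ ↦ C * r ^ (p - finrank ℝ E)) (𝓝[>] 0) (𝓝 0) := by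
    have := (Real.continuousAt_rpow_const 0 (p - finrank ℝ E) (.inr (sub_pos.2 hp).le)).tendsto
    rw [Real.zero_rpow (sub_pos.2 hp).ne'] at this
    simpa only [mul_zero] using (this.mono_left nhdsWithin_le_nhds).const_mul C
  obtain ⟨r, hr, hr0⟩ := ((hlim.eventually_le_const hη).and self_mem_nhdsWithin).exists
  exact ⟨r, hr0, (hscale r hr0).trans_le hr⟩

end BallAverage

section NearMinimum

variable {E : Type*} [NormedAddCommGroup E]

/-- The bump `(1 - |x - x₀|²)₊`. A small multiple of it, subtracted from a function that is almost
minimal at `x₀`, makes the minimum attained near `x₀`. -/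
def bump (x₀ x : E) : ℝ := max 0 (1 - ‖x - x₀‖ ^ 2)

lemma bump_nonneg (x₀ x : E) : 0 ≤ bump x₀ x := le_max_left _ _

lemma bump_le_one (x₀ x : E) : bump x₀ x ≤ 1 := max_le zero_le_one (sub_le_self _ (by positivity))

lemma bump_self (x₀ : E) : bump x₀ x₀ = 1 := by simp [bump]

lemma bump_eq_zero {x₀ x : E} (hx : x ∉ closedBall x₀ 1) : bump x₀ x = 0 := by
  rw [mem_closedBall, dist_eq_norm, not_le] at hx
  exact max_eq_left (sub_nonpos.2 (one_le_pow₀ hx.le))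

@[fun_prop]
lemma continuous_bump (x₀ : E) : Continuous (bump x₀) := by
  unfold bump
  fun_prop

lemma exists_perturbed_min [ProperSpace E] {w : E → ℝ} (hw : Continuous w) {a κ : ℝ}
    (ha : ∀ x, a ≤ w x) {x₀ : E} (hx₀ : w x₀ < a + κ) :
    ∃ y ∈ closedBall x₀ 1, w y ≤ w x₀ ∧
      ∀ x, w y - 2 * κ * bump x₀ y ≤ w x - 2 * κ * bump x₀ x := by
  have hκ : 0 < κ := by linarith [ha x₀]
  have hcenter : x₀ ∈ closedBall x₀ 1 := mem_closedBall_self zero_le_one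
  obtain ⟨y, hy, hmin⟩ := (isCompact_closedBall x₀ 1).exists_isMinOn ⟨x₀, hcenter⟩
    (by fun_prop : Continuous fun x ↦ w x - 2 * κ * bump x₀ x).continuousOn
  have hycenter : w y - 2 * κ * bump x₀ y ≤ w x₀ - 2 * κ := by
    simpa only [bump_self, mul_one] using isMinOn_iff.1 hmin x₀ hcenter
  refine ⟨y, hy, ?_, fun x ↦ ?_⟩
  · have : 2 * κ * bump x₀ y ≤ 2 * κ := mul_le_of_le_one_right (by positivity) (bump_le_one _ _)
    linarith
  · by_cases hx : x ∈ closedBall x₀ 1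
    · exact isMinOn_iff.1 hmin x hx
    · rw [bump_eq_zero hx]
      linarith [ha x]

variable [InnerProductSpace ℝ E]

lemma bump_second_difference_le {x₀ y : E} (hy : y ∈ closedBall x₀ 1) (z : E) :
    (bump x₀ y - bump x₀ (y + z)) + (bump x₀ y - bump x₀ (y + -z)) ≤ 2 * min (‖z‖ ^ 2) 1 := by
  have hbump : bump x₀ y = 1 - ‖y - x₀‖ ^ 2 :=
    max_eq_right (sub_nonneg.2 (pow_le_one₀ (norm_nonneg _) (mem_closedBall_iff_norm.1 hy)))
  have hplus : 1 - ‖y - x₀ + z‖ ^ 2 ≤ bump x₀ (y + z) := by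
    rw [sub_add_eq_add_sub]
    exact le_max_right _ _
  have hminus : 1 - ‖y - x₀ - z‖ ^ 2 ≤ bump x₀ (y + -z) := by
    rw [sub_right_comm, sub_eq_add_neg y z]
    exact le_max_right _ _
  have hparallelogram := parallelogram_law_with_norm ℝ (y - x₀) z
  rw [mul_min_of_nonneg _ _ zero_le_two, le_min_iff]
  constructor
  · linarith
  · linarith [bump_le_one x₀ y, bump_nonneg x₀ (y + z), bump_nonneg x₀ (y + -z)]

variable [FiniteDimensional ℝ E] [MeasurableSpace E] [BorelSpace E] {p : ℝ}

lemma integrableOn_bump_sub (hp : finrank ℝ E < p) (x₀ y : E) {ε : ℝ} (hε : 0 < ε) :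
    IntegrableOn (fun z ↦ (bump x₀ y - bump x₀ (y + z)) / ‖z‖ ^ p) {z | ε ≤ ‖z‖} :=
  integrableOn_div_norm_rpow hp (by fun_prop) (fun z ↦ abs_sub_le_of_nonneg_of_le
    (bump_nonneg _ _) (bump_le_one _ _) (bump_nonneg _ _) (bump_le_one _ _)) hε

variable [Nontrivial E]

-- Averaging over `z` and `-z` turns the first differences into second differences.
lemma setIntegral_bump_sub_le (hp : p ∈ Ioo (finrank ℝ E : ℝ) (finrank ℝ E + 2)) {x₀ y : E}
    (hy : y ∈ closedBall x₀ 1) {ε : ℝ} (hε : 0 < ε) :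
    ∫ z in {z : E | ε ≤ ‖z‖}, (bump x₀ y - bump x₀ (y + z)) / ‖z‖ ^ p ≤ levyMass E p := by
  set S : Set E := {z | ε ≤ ‖z‖}
  have hS : -S = S := by ext z; simp [S]
  set G : E → ℝ := fun z ↦ (bump x₀ y - bump x₀ (y + z)) / ‖z‖ ^ p
  have hG : IntegrableOn G S := integrableOn_bump_sub hp.1 x₀ y hε
  have hGneg : IntegrableOn (fun z ↦ G (-z)) S := by rw [← hS]; exact hG.comp_neg
  have hkernel := integrable_min_sq_one_div_norm_rpow (μ := (volume : Measure E)) hp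
  have hsymm : ∫ z in S, (G z + G (-z)) = 2 * ∫ z in S, G z := by
    rw [integral_add hG hGneg, setIntegral_comp_neg hS, two_mul]
  have hle : ∫ z in S, (G z + G (-z)) ≤ 2 * levyMass E p :=
    calc ∫ z in S, (G z + G (-z)) ≤ ∫ z in S, 2 * (min (‖z‖ ^ 2) 1 / ‖z‖ ^ p) := by
          refine integral_mono (hG.add hGneg) (hkernel.integrableOn.const_mul 2) fun z ↦ ?_
          simp only [G, norm_neg]
          rw [← add_div, ← mul_div_assoc]
          gcongr
          exact bump_second_difference_le hy z
      _ = 2 * ∫ z in S, min (‖z‖ ^ 2) 1 / ‖z‖ ^ p := integral_const_mul _ _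
      _ ≤ 2 * levyMass E p := by
          gcongr
          exact setIntegral_le_integral hkernel (.of_forall fun z ↦ by positivity)
  linarith

variable {w : E → ℝ} {B : ℝ}

lemma ballAverage_le_of_perturbed_min (hp : p ∈ Ioo (finrank ℝ E : ℝ) (finrank ℝ E + 2))
    (hw : Continuous w) (hB : ∀ x, |w x| ≤ B) {a κ : ℝ} (ha : ∀ x, a ≤ w x) {x₀ y : E}
    (hy : y ∈ closedBall x₀ 1) (hya : w y ≤ a + κ)
    (hmin : ∀ x, w y - 2 * κ * bump x₀ y ≤ w x - 2 * κ * bump x₀ x) {L : ℝ}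
    (hL : HasPVIntegral p w y L) {ρ R : ℝ} {c : E} (hρ : 0 < ρ) (hρc : ρ < ‖c‖)
    (hR : ‖c‖ + ρ ≤ R) :
    ballAverage ρ w (y + c) ≤
      a + 3 * κ + averageFactor E p ρ R * (2 * κ * levyMass E p - L) := by
  have hκ : 0 ≤ κ := by linarith [ha y]
  have hp0 : 0 ≤ p := (Nat.cast_nonneg _).trans hp.1.le
  set F : E → ℝ := fun z ↦ w (y + z) - w y + 2 * κ * (bump x₀ y - bump x₀ (y + z))
  have hFc : Continuous F := by fun_prop
  have hF0 (z : E) : 0 ≤ F z := by linarith [hmin (y + z)]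
  have havg : ballAverage ρ w (y + c) ≤ a + 3 * κ + ballAverage ρ F c := by
    have hpointwise : ∀ z ∈ ball c ρ, w (y + z) - F z ≤ a + 3 * κ := fun z _ ↦ by
      have : κ * (bump x₀ (y + z) - bump x₀ y) ≤ κ :=
        mul_le_of_le_one_right hκ (by linarith [bump_le_one x₀ (y + z), bump_nonneg x₀ y])
      linarith
    have := ballAverage_le hρ (u := (fun z ↦ w (y + z)) - F) (by fun_prop) hpointwise
    rw [ballAverage_sub (by fun_prop) hFc, ballAverage_comp_add_left] at this
    linarith
  have htrunc : ∀ᶠ ε in 𝓝[>] (0 : ℝ), ballAverage ρ F c ≤ averageFactor E p ρ R *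
      (2 * κ * levyMass E p - ∫ z in {z : E | ε ≤ ‖z‖}, (w y - w (y + z)) / ‖z‖ ^ p) := by
    filter_upwards [Ioc_mem_nhdsGT (sub_pos.2 hρc)] with ε ⟨hε, hεc⟩
    have hwint : IntegrableOn (fun z ↦ (w y - w (y + z)) / ‖z‖ ^ p) {z | ε ≤ ‖z‖} :=
      integrableOn_div_norm_rpow hp.1 (by fun_prop)
        (fun z ↦ (abs_sub _ _).trans (add_le_add (hB _) (hB _))) hε
    have hbint := integrableOn_bump_sub hp.1 x₀ y hε
    have hsplit : (fun z ↦ F z / ‖z‖ ^ p) = fun z ↦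
        2 * κ * ((bump x₀ y - bump x₀ (y + z)) / ‖z‖ ^ p) - (w y - w (y + z)) / ‖z‖ ^ p := by
      ext z
      simp only [F]
      ring
    have hFint : IntegrableOn (fun z ↦ F z / ‖z‖ ^ p) {z | ε ≤ ‖z‖} := by
      rw [hsplit]
      exact (hbint.const_mul _).sub hwint
    refine (ballAverage_le_averageFactor_mul hp0 hρ hF0 hε hFint (by linarith) hR).trans ?_
    have hR0 : 0 ≤ R := by linarith
    rw [hsplit, integral_sub (hbint.const_mul _) hwint, integral_const_mul]
    gcongr
    · exact averageFactor_nonneg hR0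
    · exact setIntegral_bump_sub_le hp hy hε
  refine havg.trans ?_
  gcongr
  exact ge_of_tendsto ((hL.const_sub _).const_mul _) htrunc

end NearMinimum

section NormBounds

variable {E : Type*} [NormedAddCommGroup E] [NormedSpace ℝ E]

lemma div_opNorm_add_one_lt_norm {ℓ : E →L[ℝ] ℝ} {α : ℝ} (hα : 0 < α) {v : E} (hv : α ≤ ℓ v) :
    α / (‖ℓ‖ + 1) < ‖v‖ := by
  have hv0 : 0 < ‖v‖ := norm_pos_iff.2 fun h ↦ by simp [h] at hv; linarith
  have hℓv : ℓ v ≤ ‖ℓ‖ * ‖v‖ := (le_abs_self _).trans (ℓ.le_opNorm v)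
  rw [div_lt_iff₀ (by positivity)]
  linarith

lemma halfInteger_offset_norm_mem (v : E) {J j : ℕ} (hj : j < 2 * J) :
    ‖(1 / 2 - J : ℝ) • v + j • v‖ ∈ Icc (‖v‖ / 2) (J * ‖v‖) := by
  have hcoeff : 1 / 2 ≤ |1 / 2 - J + (j : ℝ)| ∧ |1 / 2 - J + (j : ℝ)| ≤ J := by
    rcases lt_or_ge j J with hjJ | hjJ
    · have : (j + 1 : ℝ) ≤ J := by exact_mod_cast hjJ
      rw [abs_of_neg (by linarith)]
      constructor <;> linarith [j.cast_nonneg (α := ℝ)]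
    · have : (J : ℝ) ≤ j := by exact_mod_cast hjJ
      have : (j + 1 : ℝ) ≤ 2 * J := by exact_mod_cast hj
      rw [abs_of_pos (by linarith)]
      constructor <;> linarith
  rw [← Nat.cast_smul_eq_nsmul ℝ, ← add_smul, norm_smul, Real.norm_eq_abs]
  constructor <;> nlinarith [norm_nonneg v]

end NormBounds

section UniformLimits

/-- `u → ±1` as `ℓ → ±∞`, uniformly on the level sets of `ℓ`. -/
def UniformLimits {X : Type*} (ℓ u : X → ℝ) : Prop :=
  ∀ ε > (0 : ℝ), ∃ M > (0 : ℝ), ∀ x, (M < ℓ x → |u x - 1| < ε) ∧ (ℓ x < -M → |u x + 1| < ε)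

namespace UniformLimits

variable {E : Type*} [NormedAddCommGroup E] [InnerProductSpace ℝ E] [FiniteDimensional ℝ E]
  [MeasurableSpace E] [BorelSpace E] {ℓ : E →L[ℝ] ℝ} {u : E → ℝ}

lemma exists_ballAverage_bounds (hlim : UniformLimits ℓ u) (hu : Continuous u) {ρ : ℝ}
    (hρ : 0 < ρ) :
    ∃ S > 0, ∀ x, (S ≤ ℓ x → 1 / 2 ≤ ballAverage ρ u x) ∧
      (ℓ x ≤ -S → ballAverage ρ u x ≤ -1 / 2) := by
  obtain ⟨M, hM, hMu⟩ := hlim (1 / 2) (by norm_num)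
  have hℓ : ∀ x, ∀ z ∈ ball x ρ, |ℓ z - ℓ x| ≤ ‖ℓ‖ * ρ := fun x z hz ↦ by
    rw [← map_sub, ← Real.norm_eq_abs]
    exact ℓ.le_opNorm_of_le (mem_ball_iff_norm.1 hz).le
  refine ⟨M + ‖ℓ‖ * ρ + 1, by positivity, fun x ↦ ⟨fun hx ↦ ?_, fun hx ↦ ?_⟩⟩
  · refine le_ballAverage hρ hu fun z hz ↦ ?_
    have := (hMu z).1 (by linarith [(abs_le.1 (hℓ x z hz)).1])
    linarith [(abs_lt.1 this).1]
  · refine ballAverage_le hρ hu fun z hz ↦ ?_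
    have := (hMu z).2 (by linarith [(abs_le.1 (hℓ x z hz)).2])
    linarith [(abs_lt.1 this).2]

lemma exists_one_le_ballAverage_sub (hlim : UniformLimits ℓ u) (hu : Continuous u) {ρ : ℝ}
    (hρ : 0 < ρ) {α : ℝ} (hα : 0 < α) (M : ℝ) :
    ∃ J : ℕ, ∀ v, α ≤ ℓ v → ∀ y, |ℓ y| ≤ M →
      1 ≤ ballAverage ρ u (y + (1 / 2 - J : ℝ) • v + (2 * J) • v) -
        ballAverage ρ u (y + (1 / 2 - J : ℝ) • v) := by
  obtain ⟨S, hS, hSu⟩ := hlim.exists_ballAverage_bounds hu hρ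
  obtain ⟨J, hJ⟩ := exists_nat_gt ((M + S) / α + 1)
  refine ⟨J, fun v hv y hy ↦ ?_⟩
  rw [← lt_sub_iff_add_lt, div_lt_iff₀ hα] at hJ
  have hJ1 : (0 : ℝ) < J - 1 := pos_of_mul_pos_left (by linarith [abs_nonneg (ℓ y)]) hα.le
  have hJv : (J - 1) * α ≤ (J - 1) * ℓ v := by gcongr
  obtain ⟨hylower, hyupper⟩ := abs_le.1 hy
  have hstart := (hSu (y + (1 / 2 - J : ℝ) • v)).2 (by
    rw [map_add, map_smul, smul_eq_mul]
    linarith)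
  have hend := (hSu (y + (1 / 2 - J : ℝ) • v + (2 * J) • v)).1 (by
    rw [map_add, map_add, map_smul, map_nsmul, nsmul_eq_mul, smul_eq_mul, Nat.cast_mul]
    push_cast
    linarith)
  linarith

end UniformLimits

end UniformLimits

section EntireSolution

/-- A continuous nonlinearity on `[-1, 1]` that is nonincreasing near the endpoints, as are the
nonlinearities `f = -W'` of De Giorgi type for a double-well potential `W`. -/
structure IsDeGiorgiNonlinearity (f : ℝ → ℝ) : Prop where
  continuousOn : ContinuousOn f (Icc (-1) 1)
  antitoneOn : ∃ δ > (0 : ℝ), AntitoneOn f (Icc (-1) (-1 + δ)) ∧ AntitoneOn f (Icc (1 - δ) 1)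

lemma IsDeGiorgiNonlinearity.div_const {f : ℝ → ℝ} (hf : IsDeGiorgiNonlinearity f) {C : ℝ}
    (hC : 0 ≤ C) : IsDeGiorgiNonlinearity fun t ↦ f t / C := by
  have hmono : Monotone fun t : ℝ ↦ t / C := monotone_div_right_of_nonneg hC
  obtain ⟨δ, hδ, hlow, hhigh⟩ := hf.antitoneOn
  exact ⟨hf.continuousOn.div_const C,
    δ, hδ, hmono.comp_antitoneOn hlow, hmono.comp_antitoneOn hhigh⟩

variable {E : Type*} [NormedAddCommGroup E] [InnerProductSpace ℝ E] [FiniteDimensional ℝ E]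
  [MeasurableSpace E] [BorelSpace E] {p : ℝ} {f : ℝ → ℝ} {u : E → ℝ}

/-- A continuous solution `u : E → [-1, 1]` of `PV ∫ (u(x) - u(x + z)) / |z|^p dz = f(u(x))` on the
whole space; for `p = d + 2s` this is `(-Δ)^s u = f(u)` with the constant absorbed into `f`. -/
structure IsEntireSolution (p : ℝ) (f : ℝ → ℝ) (u : E → ℝ) : Prop where
  continuous : Continuous u
  abs_le_one : ∀ x, |u x| ≤ 1
  hasPVIntegral : ∀ x, HasPVIntegral p u x (f (u x))

namespace IsEntireSolution

lemma mem_Icc (hu : IsEntireSolution p f u) (x : E) : u x ∈ Icc (-1) 1 :=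
  abs_le.1 (hu.abs_le_one x)

lemma ballAverage_mem_Icc (hu : IsEntireSolution p f u) {ρ : ℝ} (hρ : 0 < ρ) (x : E) :
    ballAverage ρ u x ∈ Icc (-1) 1 :=
  ballAverage_mem hρ hu.continuous (convex_Icc _ _) isClosed_Icc fun z _ ↦ hu.mem_Icc z

lemma exists_isGLB_translate_sub (hu : IsEntireSolution p f u) (v : E) :
    ∃ a, IsGLB (range fun x ↦ u (x + v) - u x) a :=
  Real.exists_isGLB (range_nonempty _)
    ⟨-2, forall_mem_range.2 fun x ↦ by linarith [(hu.mem_Icc (x + v)).1, (hu.mem_Icc x).2]⟩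

lemma hasPVIntegral_translate_sub (hu : IsEntireSolution p f u) (hp : finrank ℝ E < p) (y v : E) :
    HasPVIntegral p ((fun x ↦ u (x + v)) - u) y (f (u (y + v)) - f (u y)) :=
  (hu.hasPVIntegral (y + v)).comp_add_right.sub hp (hu.hasPVIntegral y)
    (hu.continuous.comp (continuous_add_const v)).measurable hu.continuous.measurable
    (fun x ↦ hu.abs_le_one (x + v)) hu.abs_le_one

lemma eventually_telescope_le [Nontrivial E] (hu : IsEntireSolution p f u)
    (hp : p ∈ Ioo (finrank ℝ E : ℝ) (finrank ℝ E + 2)) {ρ : ℝ} (hρ : 0 < ρ) (R : ℝ) {η : ℝ}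
    (hη : 0 < η) :
    ∀ᶠ κ in 𝓝[>] (0 : ℝ), ∀ v a x₀, (∀ x, a ≤ u (x + v) - u x) → u (x₀ + v) - u x₀ < a + κ →
      ∃ y, ‖y - x₀‖ ≤ 1 ∧ u (y + v) - u y < a + κ ∧ ∀ (c : E) (N : ℕ),
        (∀ j < N, ρ < ‖c + j • v‖ ∧ ‖c + j • v‖ + ρ ≤ R) →
          ballAverage ρ u (y + c + N • v) - ballAverage ρ u (y + c) ≤
            N * (a + averageFactor E p ρ R * (f (u y) - f (u (y + v))) + η) := by
  have herror : Tendsto (fun κ ↦ 3 * κ + averageFactor E p ρ R * (2 * κ * levyMass E p))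
      (𝓝[>] 0) (𝓝 0) :=
    (Continuous.tendsto' (by fun_prop) 0 0 (by simp)).mono_left nhdsWithin_le_nhds
  filter_upwards [herror.eventually_le_const hη] with κ hκ v a x₀ ha hx₀
  have hw : Continuous ((fun x ↦ u (x + v)) - u) := by have := hu.continuous; fun_prop
  obtain ⟨y, hy, hyx₀, hmin⟩ := exists_perturbed_min hw ha hx₀
  have hyκ := hyx₀.trans_lt hx₀
  refine ⟨y, mem_closedBall_iff_norm.1 hy, hyκ, fun c N hc ↦ ?_⟩
  rw [ballAverage_add_nsmul_sub hu.continuous, ← nsmul_eq_mul]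
  refine (Finset.sum_le_card_nsmul _ _ _ fun j hj ↦ ?_).trans_eq (by rw [Finset.card_range])
  obtain ⟨hρc, hcR⟩ := hc j (Finset.mem_range.1 hj)
  have := ballAverage_le_of_perturbed_min hp hw (fun x ↦ (abs_sub _ _).trans
    (add_le_add (hu.abs_le_one _) (hu.abs_le_one _))) ha hy hyκ.le hmin
    (hu.hasPVIntegral_translate_sub hp.1 y v) hρ hρc hcR
  rw [add_assoc y]
  linarith

lemma exists_neg_two_le_of_isGLB [Nontrivial E] (hu : IsEntireSolution p f u)
    (hp : p ∈ Ioo (finrank ℝ E : ℝ) (finrank ℝ E + 2)) {v : E} {a : ℝ}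
    (ha : IsGLB (range fun x ↦ u (x + v) - u x) a) {ρ : ℝ} (hρ : 0 < ρ) (R : ℝ) {η ε : ℝ}
    (hη : 0 < η) (hε : 0 < ε) :
    ∃ y, u (y + v) - u y < a + ε ∧ ∀ (c : E) (N : ℕ),
      (∀ j < N, ρ < ‖c + j • v‖ ∧ ‖c + j • v‖ + ρ ≤ R) →
        -2 ≤ N * (a + averageFactor E p ρ R * (f (u y) - f (u (y + v))) + η) := by
  obtain ⟨κ, htel, hκ⟩ :=
    ((hu.eventually_telescope_le hp hρ R hη).and (Ioc_mem_nhdsGT hε)).exists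
  obtain ⟨-, ⟨x₀, rfl⟩, -, hx₀⟩ := ha.exists_between (lt_add_of_pos_right a hκ.1)
  obtain ⟨y, -, hya, hy⟩ := htel v a x₀ (fun x ↦ ha.1 (mem_range_self x)) hx₀
  refine ⟨y, hya.trans_le (by gcongr; exact hκ.2), fun c N hc ↦ ?_⟩
  have hlower := (hu.ballAverage_mem_Icc hρ (y + c + N • v)).1
  have hupper := (hu.ballAverage_mem_Icc hρ (y + c)).2
  linarith [hy c N hc]

lemma exists_near_inf_lt [Nontrivial E] (hu : IsEntireSolution p f u)
    (hp : p ∈ Ioo (finrank ℝ E : ℝ) (finrank ℝ E + 2)) {v : E} (hv : v ≠ 0) {a : ℝ}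
    (ha : IsGLB (range fun x ↦ u (x + v) - u x) a) (ha0 : a < 0) {ε : ℝ} (hε : 0 < ε) :
    ∃ y, u (y + v) - u y < a + ε ∧ f (u (y + v)) < f (u y) := by
  have hv0 : 0 < ‖v‖ := norm_pos_iff.2 hv
  obtain ⟨N, hN⟩ := exists_nat_gt (2 / (-a / 2))
  set ρ := ‖v‖ / 2 with hρ
  set R := (N + 1) * ‖v‖ with hR
  obtain ⟨y, hya, hy⟩ := hu.exists_neg_two_le_of_isGLB hp ha (by positivity : 0 < ρ) R
    (by linarith : 0 < -a / 2) hε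
  refine ⟨y, hya, lt_of_not_ge fun hf ↦ ?_⟩
  have hoffset : ∀ j < N, ρ < ‖v + j • v‖ ∧ ‖v + j • v‖ + ρ ≤ R := fun j hj ↦ by
    have hnorm : ‖v + j • v‖ = (j + 1) * ‖v‖ := by
      rw [← succ_nsmul', ← Nat.cast_smul_eq_nsmul ℝ, norm_smul, Real.norm_natCast, Nat.cast_succ]
    have hjN : (j + 1 : ℝ) ≤ N := by exact_mod_cast hj
    rw [hnorm]
    constructor <;> nlinarith [j.cast_nonneg (α := ℝ)]
  have hsource : averageFactor E p ρ R * (f (u y) - f (u (y + v))) ≤ 0 :=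
    mul_nonpos_of_nonneg_of_nonpos (averageFactor_nonneg (by positivity)) (sub_nonpos.2 hf)
  have hcontra : -2 ≤ N * (a / 2) :=
    (hy v N hoffset).trans (mul_le_mul_of_nonneg_left (by linarith) N.cast_nonneg)
  rw [div_lt_iff₀ (by linarith)] at hN
  linarith

lemma exists_averageFactor_mul_source_sub_le (hu : IsEntireSolution p f u) (hp : finrank ℝ E < p)
    (hf : ContinuousOn f (Icc (-1) 1)) {η : ℝ} (hη : 0 < η) :
    ∃ r > 0, ∀ x y, averageFactor E p (r / 2) (3 * r) * (f (u x) - f (u y)) ≤ η := by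
  obtain ⟨K, hK⟩ := isCompact_Icc.exists_bound_of_continuousOn hf
  have hK0 : 0 ≤ K := (norm_nonneg _).trans (hK 1 (by norm_num))
  obtain ⟨r, hr, hfactor⟩ := exists_averageFactor_le hp (by positivity : 0 < η / (2 * K + 1))
  refine ⟨r, hr, fun x y ↦ ?_⟩
  have hsource : f (u x) - f (u y) ≤ 2 * K + 1 := by
    linarith [(abs_le.1 (hK _ (hu.mem_Icc x))).2, (abs_le.1 (hK _ (hu.mem_Icc y))).1]
  calc _ ≤ averageFactor E p (r / 2) (3 * r) * (2 * K + 1) := by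
        gcongr
        exact averageFactor_nonneg (by positivity)
    _ ≤ η / (2 * K + 1) * (2 * K + 1) := by gcongr
    _ = η := by field_simp

lemma exists_sub_le_translate [Nontrivial E] (hu : IsEntireSolution p f u)
    (hp : p ∈ Ioo (finrank ℝ E : ℝ) (finrank ℝ E + 2)) (hf : ContinuousOn f (Icc (-1) 1)) {v : E}
    (hv : v ≠ 0) {κ : ℝ} (hκ : 0 < κ) : ∃ t > (0 : ℝ), ∀ x, u x - κ ≤ u (x + t • v) := by
  obtain ⟨r, hr, hsource⟩ :=
    hu.exists_averageFactor_mul_source_sub_le hp.1 hf (by positivity : 0 < κ / 4)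
  have hv0 : 0 < ‖v‖ := norm_pos_iff.2 hv
  obtain ⟨N, hN⟩ := exists_nat_gt (4 / κ)
  have hN0 : 0 < (N : ℝ) := (by positivity : 0 < 4 / κ).trans hN
  set h := r / ‖v‖ with hh
  have h0 : 0 < h := by positivity
  set t := h / N
  have ht0 : 0 < t := by positivity
  refine ⟨t, ht0, fun x ↦ ?_⟩
  obtain ⟨a, ha⟩ := hu.exists_isGLB_translate_sub (t • v)
  suffices -κ ≤ a by linarith [ha.1 (mem_range_self x)]
  by_contra! haκ
  obtain ⟨y, -, hy⟩ := hu.exists_neg_two_le_of_isGLB hp ha (half_pos hr) (3 * r)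
    (by positivity : 0 < κ / 4) hκ
  have hoffset : ∀ j < N, r / 2 < ‖h • v + j • t • v‖ ∧ ‖h • v + j • t • v‖ + r / 2 ≤ 3 * r :=
    fun j hj ↦ by
      have hnorm : ‖h • v + j • t • v‖ = r + j * t * ‖v‖ := by
        rw [← Nat.cast_smul_eq_nsmul ℝ, smul_smul, ← add_smul, norm_smul,
          Real.norm_of_nonneg (by positivity), add_mul, hh, div_mul_cancel₀ _ hv0.ne']
      have hjt : j * t ≤ h := by
        calc j * t ≤ N * t := by gcongr
          _ = h := mul_div_cancel₀ _ hN0.ne'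
      have hupper : j * t * ‖v‖ ≤ r := by rwa [← le_div_iff₀ hv0]
      have hlower : 0 ≤ j * t * ‖v‖ := by positivity
      rw [hnorm]
      constructor <;> linarith
  have hcontra : -2 ≤ N * (-κ / 2) := (hy (h • v) N hoffset).trans
    (mul_le_mul_of_nonneg_left (by linarith [hsource y (y + t • v)]) hN0.le)
  rw [div_lt_iff₀ hκ] at hN
  linarith

lemma exists_mul_source_sub_le (hu : IsEntireSolution p f u) (hf : ContinuousOn f (Icc (-1) 1))
    (A : ℝ) {η : ℝ} (hη : 0 < η) :
    ∃ δ > 0, ∀ x y, |u x - u y| < δ → A * (f (u x) - f (u y)) ≤ η := by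
  obtain ⟨δ, hδ, hAf⟩ := Metric.uniformContinuousOn_iff.1
    (isCompact_Icc.uniformContinuousOn_of_continuous (hf.const_mul A)) η hη
  refine ⟨δ, hδ, fun x y hxy ↦ ?_⟩
  have := hAf _ (hu.mem_Icc x) _ (hu.mem_Icc y) hxy
  rw [mul_sub]
  exact (le_abs_self _).trans this.le

variable {ℓ : E →L[ℝ] ℝ}

/- If the difference were small somewhere on the slab, its means over balls along a long segment
crossing the slab would be small too; but they add up to an increment of a mean of `u` that is at
least `1`. The offsets from `y` are half-integer multiples of `v`, so as to stay away from the
singularity of the kernel. -/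
lemma exists_pos_add_le_translate_sub [Nontrivial E] (hu : IsEntireSolution p f u)
    (hp : p ∈ Ioo (finrank ℝ E : ℝ) (finrank ℝ E + 2)) (hf : ContinuousOn f (Icc (-1) 1))
    (hlim : UniformLimits ℓ u) {α : ℝ} (hα : 0 < α) (β M : ℝ) :
    ∃ κ > 0, ∀ v, α ≤ ℓ v → ‖v‖ ≤ β → ∀ a ∈ Icc (-κ) 0, (∀ x, a ≤ u (x + v) - u x) →
      ∀ x, |ℓ x| ≤ M → a + κ ≤ u (x + v) - u x := by
  set ρ := α / (‖ℓ‖ + 1) / 4 with hρ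
  have hρ0 : 0 < ρ := by positivity
  obtain ⟨J, hJ⟩ := hlim.exists_one_le_ballAverage_sub hu.continuous hρ0 hα (M + ‖ℓ‖)
  set R := (J + 1) * β
  set η := 1 / (8 * (J + 1) : ℝ) with hη
  have hη0 : 0 < η := by positivity
  obtain ⟨δ, hδ, hsource⟩ := hu.exists_mul_source_sub_le hf (averageFactor E p ρ R) hη0
  obtain ⟨κ, htel, hκ0, hκδ⟩ :=
    ((hu.eventually_telescope_le hp hρ0 R hη0).and (Ioo_mem_nhdsGT hδ)).exists
  refine ⟨κ, hκ0, fun v hαv hvβ a ⟨hκa, ha0⟩ ha x₀ hx₀ ↦ le_of_not_gt fun hlt ↦ ?_⟩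
  obtain ⟨y, hyx₀, hya, hy⟩ := htel v a x₀ ha hlt
  have hρv : 4 * ρ < ‖v‖ := by
    rw [hρ, mul_div_cancel₀ _ four_ne_zero]
    exact div_opNorm_add_one_lt_norm hα hαv
  have hoffset : ∀ j < 2 * J, ρ < ‖(1 / 2 - J : ℝ) • v + j • v‖ ∧
      ‖(1 / 2 - J : ℝ) • v + j • v‖ + ρ ≤ R := fun j hj ↦ by
    obtain ⟨hlower, hupper⟩ := halfInteger_offset_norm_mem v hj
    constructor <;> nlinarith
  have hyM : |ℓ y| ≤ M + ‖ℓ‖ := by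
    have := ℓ.le_opNorm_of_le hyx₀
    rw [map_sub, mul_one, Real.norm_eq_abs] at this
    linarith [abs_sub_abs_le_abs_sub (ℓ y) (ℓ x₀)]
  have hcross := hJ v hαv y hyM
  have hsmall : averageFactor E p ρ R * (f (u y) - f (u (y + v))) ≤ η := hsource _ _ (by
    rw [abs_sub_comm, abs_lt]
    constructor <;> linarith [ha y])
  have hJη : (2 * J : ℕ) * (η + η) < 1 := by
    rw [hη]
    push_cast
    field_simp
    linarith
  have hmul : (2 * J : ℕ) * (a + averageFactor E p ρ R * (f (u y) - f (u (y + v))) + η) ≤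
      (2 * J : ℕ) * (η + η) := by
    gcongr
    linarith
  linarith [hy _ _ hoffset]

lemma exists_near_inf_mem_slab (hu : IsEntireSolution p f u)
    (hp : p ∈ Ioo (finrank ℝ E : ℝ) (finrank ℝ E + 2))
    (hf : IsDeGiorgiNonlinearity f) (hlim : UniformLimits ℓ u) :
    ∃ M, ∀ v, 0 < ℓ v → ∀ a < 0, IsGLB (range fun x ↦ u (x + v) - u x) a →
      ∀ ε > 0, ∃ y, u (y + v) - u y < a + ε ∧ |ℓ y| ≤ M ∧ ℓ v ≤ 2 * M := by
  obtain ⟨δ, hδ, hlow, hhigh⟩ := hf.antitoneOn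
  obtain ⟨M, -, hMu⟩ := hlim δ hδ
  refine ⟨M, fun v hv a ha0 ha ε hε ↦ ?_⟩
  have hv0 : v ≠ 0 := fun h ↦ by simp [h] at hv
  have := nontrivial_of_ne v 0 hv0
  obtain ⟨y, hya, hfy⟩ := hu.exists_near_inf_lt hp hv0 ha ha0 (lt_min hε (neg_pos.2 ha0))
  have hyε : u (y + v) - u y < a + ε := hya.trans_le (by gcongr; exact min_le_left _ _)
  have hdecr : u (y + v) < u y := by linarith [min_le_right ε (-a)]
  have hlower : -M ≤ ℓ y := le_of_not_gt fun hy ↦ hfy.not_ge <|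
    have hclose := abs_lt.1 ((hMu y).2 hy)
    hlow ⟨(hu.mem_Icc _).1, by linarith⟩ ⟨(hu.mem_Icc _).1, by linarith⟩ hdecr.le
  have hupper : ℓ (y + v) ≤ M := le_of_not_gt fun hy ↦ hfy.not_ge <|
    have hclose := abs_lt.1 ((hMu (y + v)).1 hy)
    hhigh ⟨by linarith, (hu.mem_Icc _).2⟩ ⟨by linarith, (hu.mem_Icc _).2⟩ hdecr.le
  rw [map_add] at hupper
  exact ⟨y, hyε, abs_le.2 ⟨hlower, by linarith⟩, by linarith⟩

lemma exists_le_translate_of_sub_le (hu : IsEntireSolution p f u)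
    (hp : p ∈ Ioo (finrank ℝ E : ℝ) (finrank ℝ E + 2)) (hf : IsDeGiorgiNonlinearity f)
    (hlim : UniformLimits ℓ u) {v : E} (hv : 0 < ℓ v) :
    ∃ κ > 0, ∃ T, ∀ t ≥ (1 : ℝ), (t ≤ T → ∀ x, u x - κ ≤ u (x + t • v)) →
      ∀ x, u x ≤ u (x + t • v) := by
  have := nontrivial_of_ne v 0 fun h ↦ by simp [h] at hv
  obtain ⟨M, hslab⟩ := hu.exists_near_inf_mem_slab hp hf hlim
  set T := 2 * M / ℓ v
  obtain ⟨κ, hκ, hgap⟩ := hu.exists_pos_add_le_translate_sub hp hf.continuousOn hlim hv (T * ‖v‖) M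
  refine ⟨κ, hκ, T, fun t ht hclose x ↦ ?_⟩
  obtain ⟨a, ha⟩ := hu.exists_isGLB_translate_sub (t • v)
  suffices 0 ≤ a by linarith [ha.1 (mem_range_self x)]
  by_contra! ha0
  have hℓt : ℓ (t • v) = t * ℓ v := by rw [map_smul, smul_eq_mul]
  obtain ⟨y, hya, hyM, htM⟩ := hslab (t • v) (by rw [hℓt]; positivity) a ha0 ha κ hκ
  have htT : t ≤ T := by rwa [hℓt, ← le_div_iff₀ hv] at htM
  have haκ : -κ ≤ a := ha.2 (forall_mem_range.2 fun x ↦ by linarith [hclose htT x])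
  have hnorm : ‖t • v‖ ≤ T * ‖v‖ := by
    rw [norm_smul, Real.norm_of_nonneg (by linarith)]
    gcongr
  exact hya.not_ge (hgap (t • v) (by rw [hℓt]; exact le_mul_of_one_le_left hv.le ht) hnorm a
    ⟨haκ, ha0.le⟩ (fun x ↦ ha.1 (mem_range_self x)) y hyM)

lemma le_translate (hu : IsEntireSolution p f u)
    (hp : p ∈ Ioo (finrank ℝ E : ℝ) (finrank ℝ E + 2)) (hf : IsDeGiorgiNonlinearity f)
    (hlim : UniformLimits ℓ u) {v : E} (hv : 0 < ℓ v) (x : E) : u x ≤ u (x + v) := by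
  have hv0 : v ≠ 0 := fun h ↦ by simp [h] at hv
  have := nontrivial_of_ne v 0 hv0
  obtain ⟨κ, hκ, T, hT⟩ := hu.exists_le_translate_of_sub_le hp hf hlim hv
  obtain ⟨h, hh, hback⟩ := hu.exists_sub_le_translate hp hf.continuousOn (neg_ne_zero.2 hv0) hκ
  have hslide : ∀ k : ℕ, ∀ t ≥ 1, T < t + k * h → ∀ x, u x ≤ u (x + t • v) := by
    intro k
    induction k with
    | zero => exact fun t ht hTt ↦ hT t ht fun htT ↦ by simp at hTt; linarith
    | succ k ih =>
      refine fun t ht hTt ↦ hT t ht fun _ x ↦ ?_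
      have hlarge := ih (t + h) (by linarith) (by push_cast at hTt; linarith) x
      have hstep := hback (x + (t + h) • v)
      rw [smul_neg, ← sub_eq_add_neg, add_sub_assoc, ← sub_smul, add_sub_cancel_right] at hstep
      linarith
  obtain ⟨k, hk⟩ := exists_nat_gt (T / h)
  rw [div_lt_iff₀ hh] at hk
  simpa only [one_smul] using hslide k 1 le_rfl (by linarith) x

end IsEntireSolution

end EntireSolution

theorem monotonicity_whole_space_general {E : Type*} [NormedAddCommGroup E]
    [InnerProductSpace ℝ E] [FiniteDimensional ℝ E] [MeasurableSpace E] [BorelSpace E] {p : ℝ}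
    (hp : p ∈ Ioo (finrank ℝ E : ℝ) (finrank ℝ E + 2)) {f : ℝ → ℝ}
    (hf : IsDeGiorgiNonlinearity f) {u : E → ℝ} (hu : IsEntireSolution p f u) {ℓ : E →L[ℝ] ℝ}
    (hlim : UniformLimits ℓ u) {v : E} (hv : 0 < ℓ v) (x : E) : u x < u (x + v) := by
  have := nontrivial_of_ne v 0 fun h ↦ by simp [h] at hv
  obtain ⟨κ, hκ, hgap⟩ := hu.exists_pos_add_le_translate_sub hp hf.continuousOn hlim hv ‖v‖ |ℓ x|
  linarith [hgap v le_rfl le_rfl 0 ⟨by linarith, le_rfl⟩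
    (fun y ↦ sub_nonneg.2 (hu.le_translate hp hf hlim hv y)) x le_rfl]

section Euclidean

variable {n : ℕ} {s Cns : ℝ} {u : Pt n → ℝ}

lemma C11loc.continuous (hu : C11loc n u univ) : Continuous u :=
  continuous_iff_continuousAt.2 fun x ↦ by
    obtain ⟨ε, hε, -, hd, -⟩ := hu x (mem_univ x)
    exact hd.continuousOn.continuousAt (ball_mem_nhds x hε)

lemma HasFracLap.hasPVIntegral {x : Pt n} {L : ℝ} (hC : 0 < Cns)
    (h : HasFracLap n s Cns u x L) : HasPVIntegral (n + 2 * s) u x (L / Cns) := by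
  refine (h.div_const Cns).congr fun ε ↦ ?_
  have hshift := (measurePreserving_add_left (volume : Measure (Pt n)) x).setIntegral_preimage_emb
    (measurableEmbedding_addLeft x) (fun y ↦ (u x - u y) / dist x y ^ ((n : ℝ) + 2 * s))
    {y | ε ≤ dist x y}
  rw [mul_div_cancel_left₀ _ hC.ne', ← hshift]
  simp only [preimage_ofPred_eq, dist_self_add_right]

lemma isEntireSolution_of_hasFracLap (hC : 0 < Cns) {f : ℝ → ℝ} (hu : C11loc n u univ)
    (heq : ∀ x, HasFracLap n s Cns u x (f (u x))) (hub : ∀ x, |u x| ≤ 1) :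
    IsEntireSolution (n + 2 * s) (fun t ↦ f t / Cns) u :=
  ⟨hu.continuous, hub, fun x ↦ (heq x).hasPVIntegral hC⟩

end Euclidean

/-- Monotonicity of solutions of `(-Δ)^s u = f(u)` in the whole space,
for De Giorgi type nonlinearities. -/
theorem monotonicity_whole_space
    (n : ℕ) (hn : 0 < n) (s : ℝ) (hs : s ∈ Set.Ioo (0 : ℝ) 1) (Cns : ℝ) (hCns : 0 < Cns)
    (f : ℝ → ℝ) (hfc : ContinuousOn f (Set.Icc (-1 : ℝ) 1))
    (hfmono : ∃ δ > (0 : ℝ), AntitoneOn f (Set.Icc (-1 : ℝ) (-1 + δ)) ∧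
      AntitoneOn f (Set.Icc (1 - δ) (1 : ℝ)))
    (u : Pt n → ℝ) (huL : MemL2s n s u) (huC : C11loc n u Set.univ)
    (heq : ∀ x : Pt n, HasFracLap n s Cns u x (f (u x)))
    (hub : ∀ x : Pt n, |u x| ≤ 1)
    (hlim : ∀ ε > (0 : ℝ), ∃ M > (0 : ℝ), ∀ x : Pt n,
      (M < x (lastIdx n hn) → |u x - 1| < ε) ∧ (x (lastIdx n hn) < -M → |u x + 1| < ε)) :
    ∀ τ : ℝ, 0 < τ → ∀ x : Pt n, u x < u (x + τ • eN n hn) := by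
  intro τ hτ x
  have hp : (n : ℝ) + 2 * s ∈ Ioo (finrank ℝ (Pt n) : ℝ) (finrank ℝ (Pt n) + 2) := by
    rw [finrank_euclideanSpace_fin]
    constructor <;> linarith [hs.1, hs.2]
  exact monotonicity_whole_space_general hp
    (IsDeGiorgiNonlinearity.div_const ⟨hfc, hfmono⟩ hCns.le)
    (isEntireSolution_of_hasFracLap hCns huC heq hub)
    (ℓ := EuclideanSpace.proj (lastIdx n hn)) hlim (by simpa [eN] using hτ) x
end
end

section
/- Let f : [−1, 1] → ℝ be continuous and suppose there exists δ > 0 such that f is nonincreasing on [−1, −1+δ] and nonincreasing on [1−δ, 1]. Let u ∈ L_{2s} ∩ C^{1,1}_loc(ℝ^n) satisfy (-Δ)^s u(x) = f(u(x)) for all x ∈ ℝ^n, |u(x)| ≤ 1 for all x ∈ ℝ^n, and u(x', x_n) → ±1 as x_n → ±∞, uniformly in x' ∈ ℝ^{n−1}. Then u depends on x_n only: there exists a strictly increasing function g : ℝ → ℝ such that u(x', x_n) = g(x_n) for all (x', x_n) ∈ ℝ^n. -/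
open MeasureTheory Filter Metric Set

noncomputable section

/-!
Sliding method, with `K(z) = C |z|^{-(n+2s)}` and `ℓ x = x_n`. Fix `h` with `ℓ h > 0`; the claim
`u ≤ u(· + t h)` is shown for large `t` and then propagated down to `t = 1`. Write `v = t h`. The
supremum of `D = u - u(· + v)` need not be attained, but subtracting a small paraboloid turns an
almost maximum into a maximum `x`, where the equation bounds `∫ K(z) (sup D - D(x + z)) dz`, taken
outside a small ball, by `f(u(x)) - f(u(x + v))` up to an arbitrarily small error.

Suppose `sup D > 0`. Since `D` is small far from a slab, that integral is bounded below, so the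
monotonicity of `f` near `±1` forces the almost maximum and its translate into a fixed slab; for
large `t` this is impossible. In general, the differences `D(y + j v)` telescope to an increment of
`u` across the slab, which is at least a fixed amount, so the integral is bounded below by a
constant independent of `sup D`; continuity of `f` then bounds a positive `sup D` away from
zero. As `K` has infinite mass, `u` is uniformly continuous, so a small decrease of `t` changes
`sup D` too little to make it positive.
-/

open Module
open scoped RealInnerProductSpace Topology

section Translation

variable {G : Type*} [NormedAddCommGroup G] [MeasurableSpace G] [BorelSpace G]
  {μ : Measure G} [μ.IsAddLeftInvariant] {k : G → ℝ}

theorem tendsto_integral_abs_sub_comp_sub [IsLocallyFiniteMeasure μ] [μ.InnerRegularCompactLTTop]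
    (hk : Integrable k μ) :
    Tendsto (fun h ↦ ∫ z, |k z - k (z - h)| ∂μ) (𝓝 0) (𝓝 0) := by
  have hk' : MemLp k 1 μ := memLp_one_iff_integrable.2 hk
  have : Fact ((1 : ENNReal) ≠ ⊤) := ⟨ENNReal.one_ne_top⟩
  have hcont : Continuous fun h : G ↦ ‖hk'.toLp - (DomAddAct.mk (-h) +ᵥ hk'.toLp)‖ :=
    (continuous_const.sub
      ((DomAddAct.continuous_mk.comp continuous_neg).vadd continuous_const)).norm
  refine (hcont.tendsto' 0 0 (by simp)).congr fun h ↦ ?_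
  have hvadd (z : G) : -h +ᵥ z = z - h := by rw [vadd_eq_add, neg_add_eq_sub]
  rw [DomAddAct.mk_vadd_toLp, ← MemLp.toLp_sub]
  simp only [hvadd]
  exact L1.norm_of_fun_eq_integral_norm (hk.sub (hk.comp_sub_right h))

theorem abs_integral_mul_sub_comp_add_le {g : G → ℝ} {B : ℝ} (hk : Integrable k μ)
    (hg : Continuous g) (hB : ∀ z, |g z| ≤ B) (h : G) :
    |∫ z, k z * (g z - g (z + h)) ∂μ| ≤ B * ∫ z, |k z - k (z - h)| ∂μ := by
  have hkh : Integrable (fun z ↦ k (z - h)) μ := hk.comp_sub_right h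
  have hshift : ∫ z, k z * g (z + h) ∂μ = ∫ z, k (z - h) * g z ∂μ := by
    rw [← integral_add_right_eq_self (fun z ↦ k (z - h) * g z) h]
    simp only [add_sub_cancel_right]
  have hcomm : ∫ z, k z * (g z - g (z + h)) ∂μ = ∫ z, (k z - k (z - h)) * g z ∂μ := by
    simp only [mul_sub, sub_mul]
    rw [integral_sub, integral_sub, hshift]
    · exact hk.mul_bdd hg.aestronglyMeasurable (.of_forall hB)
    · exact hkh.mul_bdd hg.aestronglyMeasurable (.of_forall hB)
    · exact hk.mul_bdd hg.aestronglyMeasurable (.of_forall hB)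
    · exact hk.mul_bdd (hg.comp (continuous_add_const h)).aestronglyMeasurable
        (.of_forall fun z ↦ hB (z + h))
  rw [hcomm, ← integral_const_mul]
  refine norm_integral_le_of_norm_le (f := fun z ↦ (k z - k (z - h)) * g z)
    ((hk.sub hkh).abs.const_mul B) (.of_forall fun z ↦ ?_)
  rw [Real.norm_eq_abs, abs_mul, mul_comm]
  exact mul_le_mul_of_nonneg_right (hB z) (abs_nonneg _)

end Translation

theorem setIntegral_eq_zero_of_odd {G : Type*} [AddGroup G] [MeasurableSpace G]
    [MeasurableNeg G] {μ : Measure G} [μ.IsNegInvariant] {S : Set G} (hS : MeasurableSet S)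
    (hS' : -S = S) {φ : G → ℝ} (hφ : ∀ z, φ (-z) = -φ z) : ∫ z in S, φ z ∂μ = 0 := by
  rw [← integral_indicator hS, ← self_eq_neg, ← integral_neg, ← integral_neg_eq_self]
  refine integral_congr_ae (.of_forall fun z ↦ ?_)
  have hz : -z ∈ S ↔ z ∈ S := by rw [← Set.mem_neg, hS']
  by_cases h : z ∈ S <;> simp [h, hz, hφ]

theorem exists_forall_sub_mul_norm_sq_le {V : Type*} [NormedAddCommGroup V] [ProperSpace V]
    {w : V → ℝ} {A ε : ℝ} (hw : Continuous w) (hA : ∀ y, w y ≤ A) {x₀ : V} (hx₀ : A - ε < w x₀) :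
    ∃ x, w x₀ ≤ w x ∧ ∀ y, w y - ε * ‖y - x₀‖ ^ 2 ≤ w x - ε * ‖x - x₀‖ ^ 2 := by
  have hε : 0 < ε := by linarith [hA x₀]
  have hcont : Continuous fun y ↦ w y - ε * ‖y - x₀‖ ^ 2 := by fun_prop
  have hfar : ∀ᶠ y in cocompact V, w y - ε * ‖y - x₀‖ ^ 2 ≤ w x₀ - ε * ‖x₀ - x₀‖ ^ 2 := by
    filter_upwards [(isCompact_closedBall x₀ 1).compl_mem_cocompact] with y hy
    have hy : 1 < ‖y - x₀‖ := by simpa [dist_eq_norm] using hy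
    have : ε * 1 ≤ ε * ‖y - x₀‖ ^ 2 := by gcongr; exact one_le_pow₀ hy.le
    simp only [sub_self, norm_zero]
    linarith [hA y]
  have hcont' : Continuous fun y ↦ -(w y - ε * ‖y - x₀‖ ^ 2) := hcont.neg
  obtain ⟨x, hx⟩ := hcont'.exists_forall_le' x₀ (hfar.mono fun _ ↦ neg_le_neg)
  refine ⟨x, ?_, fun y ↦ neg_le_neg_iff.1 (hx y)⟩
  have := hx x₀
  simp only [sub_self, norm_zero] at this
  nlinarith [sq_nonneg ‖x - x₀‖]

/-! ### Lévy kernels and their operators -/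

variable {E : Type*} [NormedAddCommGroup E] [InnerProductSpace ℝ E] [FiniteDimensional ℝ E]
  [MeasurableSpace E] [BorelSpace E]

/-- `K` is the density of a symmetric Lévy measure: `∫ min(1, |z|²) K(z) dz < ∞`. -/
structure IsLevyKernel (K : E → ℝ) : Prop where
  measurable : Measurable K
  nonneg : ∀ z, 0 ≤ K z
  even : ∀ z, K (-z) = K z
  integrable_min_mul : Integrable fun z ↦ min 1 (‖z‖ ^ 2) * K z

/-- `K` has a positive lower bound on every bounded subset of the punctured space. This replaces
the explicit kernel in the strong maximum principle. -/
def LocallyPositive {E : Type*} [NormedAddCommGroup E] (K : E → ℝ) : Prop :=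
  ∀ R : ℝ, ∃ c > 0, ∀ z : E, z ≠ 0 → ‖z‖ ≤ R → c ≤ K z

/-- The nonlocal operator with kernel `K`, as a principal value:
`L = PV ∫ K(z) (u(x) - u(x+z)) dz`. -/
def HasLevyOp (K : E → ℝ) (u : E → ℝ) (x : E) (L : ℝ) : Prop :=
  Tendsto (fun ε : ℝ ↦ ∫ z in (ball 0 ε)ᶜ, K z * (u x - u (x + z))) (𝓝[>] 0) (𝓝 L)

variable {K : E → ℝ}

namespace IsLevyKernel

theorem integrableOn_compl_ball (hK : IsLevyKernel K) {ρ : ℝ} (hρ : 0 < ρ) :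
    IntegrableOn K (ball 0 ρ)ᶜ := by
  have hm : 0 < min 1 (ρ ^ 2) := by positivity
  refine (hK.integrable_min_mul.integrableOn.const_mul (min 1 (ρ ^ 2))⁻¹).mono'
    hK.measurable.aestronglyMeasurable ?_
  filter_upwards [ae_restrict_mem measurableSet_ball.compl] with z hz
  have hz : ρ ≤ ‖z‖ := by simpa using hz
  rw [Real.norm_of_nonneg (hK.nonneg z), ← mul_assoc]
  refine le_mul_of_one_le_left (hK.nonneg z) ?_
  rw [inv_mul_eq_div, one_le_div hm]
  gcongr

theorem integrableOn_ball_norm_sq_mul (hK : IsLevyKernel K) (ρ : ℝ) :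
    IntegrableOn (fun z ↦ ‖z‖ ^ 2 * K z) (ball 0 ρ) := by
  refine (hK.integrable_min_mul.integrableOn.const_mul (max 1 (ρ ^ 2))).mono'
    ((measurable_norm.pow_const 2).mul hK.measurable).aestronglyMeasurable ?_
  filter_upwards [ae_restrict_mem measurableSet_ball] with z hz
  have hz : ‖z‖ < ρ := by simpa using hz
  rw [Real.norm_of_nonneg (mul_nonneg (sq_nonneg _) (hK.nonneg z)), ← mul_assoc]
  refine mul_le_mul_of_nonneg_right ?_ (hK.nonneg z)
  rcases le_total 1 (‖z‖ ^ 2) with h | h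
  · rw [min_eq_left h, mul_one]
    exact le_max_of_le_right (by gcongr)
  · rw [min_eq_right h]
    exact le_mul_of_one_le_left (sq_nonneg _) (le_max_left _ _)

theorem integrableOn_mul_const_sub (hK : IsLevyKernel K) {ρ : ℝ} (hρ : 0 < ρ)
    {w : E → ℝ} {B : ℝ} (hw : Continuous w) (hB : ∀ y, |w y| ≤ B)
    (A : ℝ) (x : E) : IntegrableOn (fun z ↦ K z * (A - w (x + z))) (ball 0 ρ)ᶜ := by
  refine (hK.integrableOn_compl_ball hρ).mul_bdd (c := |A| + B)
    (by fun_prop : Continuous fun z ↦ A - w (x + z)).aestronglyMeasurable (.of_forall fun z ↦ ?_)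
  exact (norm_sub_le _ _).trans (add_le_add le_rfl (hB _))

theorem exists_le_setIntegral_compl_ball (hK : IsLevyKernel K) (hinf : ¬ Integrable K)
    (B : ℝ) : ∃ ρ > 0, B ≤ ∫ z in (ball 0 ρ)ᶜ, K z := by
  cases subsingleton_or_nontrivial E
  · exact absurd .of_finite hinf
  by_contra! hlt
  have hpos (k : ℕ) : 0 < 1 / ((k : ℝ) + 1) := by positivity
  have hcover : AECover volume atTop fun k : ℕ ↦ (ball (0 : E) (1 / ((k : ℝ) + 1)))ᶜ := by
    refine ⟨?_, fun _ ↦ measurableSet_ball.compl⟩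
    filter_upwards [Measure.ae_ne volume 0] with z hz
    filter_upwards [tendsto_one_div_add_atTop_nhds_zero_nat.eventually_lt_const
      (norm_pos_iff.2 hz)] with k hk
    simpa using hk.le
  exact hinf <| hcover.integrable_of_integral_bounded_of_nonneg_ae B
    (fun k ↦ hK.integrableOn_compl_ball (hpos k)) (.of_forall hK.nonneg)
    (.of_forall fun k ↦ (hlt _ (hpos k)).le)

end IsLevyKernel

namespace HasLevyOp

variable {u v : E → ℝ} {B B' L L' : ℝ} {x : E}

theorem comp_add_right {h : E} (hu : HasLevyOp K u (x + h) L) :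
    HasLevyOp K (fun y ↦ u (y + h)) x L := by
  simpa only [HasLevyOp, add_right_comm] using hu

theorem sub (hK : IsLevyKernel K) (hu : Continuous u) (huB : ∀ y, |u y| ≤ B)
    (hv : Continuous v) (hvB : ∀ y, |v y| ≤ B') (hLu : HasLevyOp K u x L)
    (hLv : HasLevyOp K v x L') : HasLevyOp K (fun y ↦ u y - v y) x (L - L') := by
  refine (Tendsto.sub hLu hLv).congr' ?_
  filter_upwards [self_mem_nhdsWithin] with ε (hε : 0 < ε)
  rw [← integral_sub (hK.integrableOn_mul_const_sub hε hu huB _ _)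
    (hK.integrableOn_mul_const_sub hε hv hvB _ _)]
  exact integral_congr_ae (.of_forall fun z ↦ by ring)

end HasLevyOp

theorem IsLevyKernel.neg_mul_le_setIntegral_annulus (hK : IsLevyKernel K) {ε ρ a : ℝ}
    (hε : 0 < ε) (ha : 0 ≤ a) (φ : E →L[ℝ] ℝ) {ψ : E → ℝ}
    (hint : IntegrableOn (fun z ↦ K z * ψ z) (ball 0 ρ \ ball 0 ε))
    (hψ : ∀ z ∈ ball 0 ρ, -(φ z + a * ‖z‖ ^ 2) ≤ ψ z) :
    -(a * ∫ z in ball 0 ρ, ‖z‖ ^ 2 * K z) ≤ ∫ z in ball 0 ρ \ ball 0 ε, K z * ψ z := by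
  set D := ball (0 : E) ρ \ ball 0 ε with hD
  have hDm : MeasurableSet D := measurableSet_ball.diff measurableSet_ball
  have hball : IntegrableOn (fun z ↦ ‖z‖ ^ 2 * K z) (ball 0 ρ) :=
    hK.integrableOn_ball_norm_sq_mul ρ
  have hsq : IntegrableOn (fun z ↦ a * (‖z‖ ^ 2 * K z)) D :=
    (hball.mono_set sdiff_subset).const_mul a
  have hlin : IntegrableOn (fun z ↦ K z * φ z) D := by
    refine ((hK.integrableOn_compl_ball hε).mono_set fun z hz ↦ hz.2).mul_bdd (c := ‖φ‖ * ρ)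
      φ.continuous.aestronglyMeasurable ?_
    filter_upwards [ae_restrict_mem hDm] with z hz
    exact φ.le_opNorm_of_le (mem_ball_zero_iff.1 hz.1).le
  have hodd : ∫ z in D, K z * φ z = 0 :=
    setIntegral_eq_zero_of_odd hDm (by simp [hD, Set.sdiff_eq]) fun z ↦ by simp [hK.even]
  have hmono : a * ∫ z in D, ‖z‖ ^ 2 * K z ≤ a * ∫ z in ball 0 ρ, ‖z‖ ^ 2 * K z :=
    mul_le_mul_of_nonneg_left (setIntegral_mono_set hball
      (.of_forall fun z ↦ mul_nonneg (sq_nonneg _) (hK.nonneg z))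
      sdiff_subset.eventuallyLE) ha
  have hnonneg : 0 ≤ ∫ z in D, (K z * ψ z + K z * φ z + a * (‖z‖ ^ 2 * K z)) := by
    refine setIntegral_nonneg hDm fun z hz ↦ ?_
    nlinarith [hψ z hz.1, hK.nonneg z]
  rw [integral_add (f := fun z ↦ K z * ψ z + K z * φ z) (hint.add hlin) hsq,
    integral_add hint hlin, hodd, integral_const_mul] at hnonneg
  linarith

/-- The linear part `φ` of the touching paraboloid integrates to zero against the even kernel. -/
theorem HasLevyOp.setIntegral_compl_ball_le (hK : IsLevyKernel K) {w : E → ℝ} {B : ℝ}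
    (hw : Continuous w) (hB : ∀ y, |w y| ≤ B) {x : E} {L : ℝ} (hL : HasLevyOp K w x L)
    {ρ a : ℝ} (hρ : 0 < ρ) (ha : 0 ≤ a) (φ : E →L[ℝ] ℝ)
    (htouch : ∀ z ∈ ball 0 ρ, w (x + z) ≤ w x + φ z + a * ‖z‖ ^ 2) :
    ∫ z in (ball 0 ρ)ᶜ, K z * (w x - w (x + z)) ≤
      L + a * ∫ z in ball 0 ρ, ‖z‖ ^ 2 * K z := by
  refine le_of_tendsto_of_tendsto tendsto_const_nhds (hL.add_const _) ?_
  filter_upwards [Ioo_mem_nhdsGT hρ] with ε ⟨hε, hερ⟩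
  have hsplit : (ball (0 : E) ε)ᶜ = (ball 0 ρ)ᶜ ∪ ball 0 ρ \ ball 0 ε := by
    have := ball_subset_ball (x := (0 : E)) hερ.le
    grind
  have hint := hK.integrableOn_mul_const_sub hε hw hB (w x) x
  rw [hsplit, integrableOn_union] at hint
  rw [hsplit, setIntegral_union (disjoint_compl_left.mono_right sdiff_subset)
    (measurableSet_ball.diff measurableSet_ball) hint.1 hint.2]
  have hannulus := hK.neg_mul_le_setIntegral_annulus hε ha φ hint.2
    fun z hz ↦ by linarith [htouch z hz]
  linarith

/-- An Omori–Yau type maximum principle: subtracting a small paraboloid turns an almost maximum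
into a genuine maximum, at which the far part of the operator is almost at most `F`. -/
theorem exists_setIntegral_compl_ball_le_of_isLUB (hK : IsLevyKernel K) {w F : E → ℝ} {B A : ℝ}
    (hw : Continuous w) (hB : ∀ y, |w y| ≤ B) (hL : ∀ x, HasLevyOp K w x (F x))
    (hA : IsLUB (range w) A) {ρ κ : ℝ} (hρ : 0 < ρ) (hκ : 0 < κ) :
    ∃ x, A - κ < w x ∧ ∫ z in (ball 0 ρ)ᶜ, K z * (A - w (x + z)) ≤ F x + κ := by
  set C := (∫ z in (ball 0 ρ)ᶜ, K z) + ∫ z in ball 0 ρ, ‖z‖ ^ 2 * K z with hC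
  have hC0 : 0 ≤ C := add_nonneg (integral_nonneg hK.nonneg)
    (integral_nonneg fun z ↦ mul_nonneg (sq_nonneg _) (hK.nonneg z))
  obtain ⟨ε, hε, hεκ, hεC⟩ : ∃ ε > 0, ε ≤ κ ∧ ε * C ≤ κ :=
    ⟨min κ (κ / (C + 1)), by positivity, min_le_left _ _,
      (mul_le_mul_of_nonneg_right (min_le_right _ _) hC0).trans <| by
        rw [div_mul_eq_mul_div, div_le_iff₀ (by positivity)]; nlinarith⟩
  have hwA (y) : w y ≤ A := hA.1 (mem_range_self y)
  obtain ⟨-, ⟨x₀, rfl⟩, hx₀, -⟩ := hA.exists_between (sub_lt_self A hε)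
  obtain ⟨x, hx, hmax⟩ := exists_forall_sub_mul_norm_sq_le hw hwA hx₀
  have htouch (z : E) :
      w (x + z) ≤ w x + ((2 * ε) • innerSL ℝ (x - x₀)) z + ε * ‖z‖ ^ 2 := by
    have hexpand : ‖x + z - x₀‖ ^ 2 = ‖x - x₀‖ ^ 2 + 2 * ⟪x - x₀, z⟫ + ‖z‖ ^ 2 := by
      rw [add_sub_right_comm, norm_add_sq_real]
    have := hmax (x + z)
    rw [hexpand] at this
    simp only [smul_apply, innerSL_apply_apply, smul_eq_mul]
    linarith
  have hfar := HasLevyOp.setIntegral_compl_ball_le hK hw hB (hL x) hρ hε.le _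
    fun z _ ↦ htouch z
  have hshift : ∫ z in (ball 0 ρ)ᶜ, K z * (A - w (x + z)) =
      (A - w x) * (∫ z in (ball 0 ρ)ᶜ, K z) + ∫ z in (ball 0 ρ)ᶜ, K z * (w x - w (x + z)) := by
    rw [← integral_const_mul, ← integral_add ((hK.integrableOn_compl_ball hρ).const_mul _)
      (hK.integrableOn_mul_const_sub hρ hw hB _ _)]
    exact integral_congr_ae (.of_forall fun z ↦ by ring)
  have hgap : (A - w x) * (∫ z in (ball 0 ρ)ᶜ, K z) ≤ ε * ∫ z in (ball 0 ρ)ᶜ, K z :=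
    mul_le_mul_of_nonneg_right (by linarith) (integral_nonneg hK.nonneg)
  refine ⟨x, by linarith, ?_⟩
  rw [hC, mul_add] at hεC
  linarith

/-! ### Differences of translates -/

/-- The amount by which `u` exceeds its translate by `v`. The sliding method shows that it is
nonpositive. -/
def slideDiff {V : Type*} [Add V] (u : V → ℝ) (v y : V) : ℝ := u y - u (y + v)

section SlideDiff

variable {V : Type*} [NormedAddCommGroup V] {u : V → ℝ} {B : ℝ}

theorem continuous_slideDiff (hu : Continuous u) (v : V) : Continuous (slideDiff u v) := by
  unfold slideDiff
  fun_prop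

theorem abs_slideDiff_le (hB : ∀ y, |u y| ≤ B) (v y : V) : |slideDiff u v y| ≤ 2 * B :=
  (abs_sub _ _).trans (by linarith [hB y, hB (y + v)])

theorem exists_isLUB_range_slideDiff (hB : ∀ y, |u y| ≤ B) (v : V) :
    ∃ A, IsLUB (range (slideDiff u v)) A :=
  Real.exists_isLUB (range_nonempty _)
    ⟨2 * B, forall_mem_range.2 fun y ↦ (le_abs_self _).trans (abs_slideDiff_le hB v y)⟩

end SlideDiff

theorem sum_slideDiff {V : Type*} [AddCommMonoid V] (u : V → ℝ) (v y : V) (m : ℕ) :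
    ∑ j ∈ Finset.range m, slideDiff u v (y + j • v) = u y - u (y + m • v) := by
  simp only [slideDiff, add_assoc, ← succ_nsmul]
  rw [Finset.sum_range_sub' fun j ↦ u (y + j • v), zero_smul, add_zero]

theorem le_sum_sub_slideDiff {V : Type*} [NormedAddCommGroup V] [NormedSpace ℝ V]
    {u : V → ℝ} {ℓ : V →L[ℝ] ℝ} {A d L : ℝ}
    (hcross : ∀ y y', ℓ y ≤ -L → L ≤ ℓ y' → u y + d ≤ u y') (hA : 0 ≤ A) {v y : V} {N : ℕ}
    (hN : L + |ℓ y| ≤ (N + 1 / 2) * ℓ v) :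
    d ≤ ∑ j ∈ Finset.range (2 * N + 1),
      (A - slideDiff u v (y + ((j : ℝ) - (N + 1 / 2)) • v)) := by
  have hstart : ℓ (y - ((N : ℝ) + 1 / 2) • v) ≤ -L := by
    simp only [map_sub, map_smul, smul_eq_mul]
    linarith [le_abs_self (ℓ y)]
  have hend : L ≤ ℓ (y - ((N : ℝ) + 1 / 2) • v + (2 * N + 1) • v) := by
    simp only [map_add, map_sub, map_smul, map_nsmul, smul_eq_mul, nsmul_eq_mul]
    push_cast
    linarith [neg_abs_le (ℓ y)]
  have hpoint (j : ℕ) : y + ((j : ℝ) - (N + 1 / 2)) • v = y - ((N : ℝ) + 1 / 2) • v + j • v := by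
    rw [← Nat.cast_smul_eq_nsmul ℝ]
    module
  simp only [hpoint]
  rw [Finset.sum_sub_distrib, sum_slideDiff, Finset.sum_const, Finset.card_range, nsmul_eq_mul]
  have : 0 ≤ ((2 * N + 1 : ℕ) : ℝ) * A := by positivity
  linarith [hcross _ _ hstart hend]

section UniformContinuity

variable {u F : E → ℝ} {B : ℝ}

theorem HasLevyOp.slideDiff (hK : IsLevyKernel K) (hu : Continuous u) (hB : ∀ y, |u y| ≤ B)
    (hL : ∀ x, HasLevyOp K u x (F x)) (v x : E) :
    HasLevyOp K (slideDiff u v) x (F x - F (x + v)) :=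
  .sub hK hu hB (hu.comp (continuous_add_const v)) (fun y ↦ hB (y + v)) (hL x)
    (hL (x + v)).comp_add_right

theorem IsLevyKernel.exists_setIntegral_mul_slideDiff_le (hK : IsLevyKernel K)
    (hu : Continuous u) (hB : ∀ y, |u y| ≤ B) {ρ κ : ℝ} (hρ : 0 < ρ) (hκ : 0 < κ) :
    ∃ r > 0, ∀ h, ‖h‖ < r → ∀ x,
      ∫ z in (ball 0 ρ)ᶜ, K z * slideDiff u h (x + z) ≤ κ := by
  set k := (ball (0 : E) ρ)ᶜ.indicator K with hk
  have hkint : Integrable k :=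
    (hK.integrableOn_compl_ball hρ).integrable_indicator measurableSet_ball.compl
  have hsmall : ∀ᶠ h in 𝓝 0, B * ∫ z, |k z - k (z - h)| < κ := by
    have := (tendsto_integral_abs_sub_comp_sub hkint).const_mul B
    exact this.eventually_lt_const (by simpa using hκ)
  obtain ⟨r, hr, hball⟩ := Metric.eventually_nhds_iff.1 hsmall
  refine ⟨r, hr, fun h hh x ↦ ?_⟩
  calc ∫ z in (ball 0 ρ)ᶜ, K z * slideDiff u h (x + z)
      = ∫ z, k z * (u (x + z) - u (x + (z + h))) := by
        rw [← integral_indicator measurableSet_ball.compl]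
        simp only [hk, slideDiff, Set.indicator_mul_left, add_assoc]
    _ ≤ B * ∫ z, |k z - k (z - h)| := (le_abs_self _).trans <|
        abs_integral_mul_sub_comp_add_le hkint (hu.comp (continuous_const_add x))
          (fun z ↦ hB (x + z)) h
    _ ≤ κ := (hball (by simpa using hh)).le

/-- With a kernel of infinite mass, a bounded right-hand side forces uniform continuity: the mass
of `K` away from the origin times `sup (slideDiff u h)` stays bounded as `h → 0`. -/
theorem uniformContinuous_of_hasLevyOp (hK : IsLevyKernel K) (hinf : ¬ Integrable K)
    (hu : Continuous u) (hB : ∀ y, |u y| ≤ B) {C : ℝ} (hF : ∀ x, |F x| ≤ C)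
    (hL : ∀ x, HasLevyOp K u x (F x)) : UniformContinuous u := by
  refine Metric.uniformContinuous_iff.2 fun η hη ↦ ?_
  obtain ⟨ρ, hρ, hmass⟩ := hK.exists_le_setIntegral_compl_ball hinf ((2 * C + 3) / η)
  rw [div_le_iff₀ hη] at hmass
  obtain ⟨r, hr, hsmall⟩ := hK.exists_setIntegral_mul_slideDiff_le hu hB hρ one_pos
  have hlt (h : E) (hh : ‖h‖ < r) (y : E) : slideDiff u h y < η := by
    obtain ⟨A, hA⟩ := exists_isLUB_range_slideDiff hB h
    refine (hA.1 (mem_range_self y)).trans_lt (lt_of_not_ge fun hηA ↦ ?_)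
    obtain ⟨x, -, hx⟩ := exists_setIntegral_compl_ball_le_of_isLUB hK (continuous_slideDiff hu h)
      (abs_slideDiff_le hB h) (HasLevyOp.slideDiff hK hu hB hL h) hA hρ one_pos
    have hsplit : ∫ z in (ball 0 ρ)ᶜ, K z * (A - slideDiff u h (x + z)) =
        (∫ z in (ball 0 ρ)ᶜ, K z) * A - ∫ z in (ball 0 ρ)ᶜ, K z * slideDiff u h (x + z) := by
      simp only [mul_sub]
      rw [integral_sub ((hK.integrableOn_compl_ball hρ).mul_const A), integral_mul_const]
      simpa [IntegrableOn] using (hK.integrableOn_mul_const_sub hρ (continuous_slideDiff hu h)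
        (abs_slideDiff_le hB h) 0 x).neg
    have hmassA : (∫ z in (ball 0 ρ)ᶜ, K z) * η ≤ (∫ z in (ball 0 ρ)ᶜ, K z) * A :=
      mul_le_mul_of_nonneg_left hηA (integral_nonneg hK.nonneg)
    linarith [hsmall h hh x, le_of_abs_le (hF x), neg_le_of_abs_le (hF (x + h))]
  refine ⟨r, hr, fun {a b} hab ↦ abs_lt.2 ?_⟩
  rw [dist_eq_norm] at hab
  have hba := hlt (a - b) hab b
  have hab := hlt (b - a) (by rwa [norm_sub_rev]) a
  simp only [slideDiff, add_sub_cancel] at hab hba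
  constructor <;> linarith

end UniformContinuity

/-! ### Lower bounds for the far part of the operator -/

theorem integrableOn_ball_of_continuous_s5 {g : E → ℝ} (hg : Continuous g) (a : E) (ρ : ℝ) :
    IntegrableOn g (ball a ρ) :=
  (hg.continuousOn.integrableOn_compact (isCompact_closedBall a ρ)).mono_set ball_subset_closedBall

theorem ball_subset_closedBall_sdiff_ball {V : Type*} [SeminormedAddCommGroup V] {a : V}
    {r ρ R : ℝ} (hρ : r + ρ ≤ ‖a‖) (hR : ‖a‖ + r ≤ R) :
    ball a r ⊆ closedBall 0 R \ ball 0 ρ := by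
  intro z hz
  rw [mem_ball_iff_norm] at hz
  simp only [Set.mem_sdiff, mem_closedBall_zero_iff, mem_ball_zero_iff, not_lt]
  constructor
  · linarith [norm_le_norm_add_norm_sub' z a]
  · linarith [norm_le_norm_add_norm_sub z a]

theorem volume_real_ball_pos {ρ : ℝ} (hρ : 0 < ρ) : 0 < volume.real (ball (0 : E) ρ) :=
  ENNReal.toReal_pos (measure_ball_pos _ _ hρ).ne' measure_ball_lt_top.ne

theorem mul_volume_ball_le_of_le_sum_translates {g : E → ℝ} (hg : Continuous g) {ρ c d I : ℝ}
    (hc : 0 ≤ c) {m : ℕ} {a : ℕ → E} (hI : ∀ j < m, c * ∫ z in ball (a j) ρ, g z ≤ I)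
    (hd : ∀ z ∈ ball 0 ρ, d ≤ ∑ j ∈ Finset.range m, g (z + a j)) :
    c * (d * volume.real (ball (0 : E) ρ)) ≤ m * I := by
  have htranslate (b : E) : ∫ z in ball b ρ, g z = ∫ z in ball 0 ρ, g (z + b) := by
    rw [← (measurePreserving_add_right volume b).setIntegral_preimage_emb
      (measurableEmbedding_addRight b), preimage_add_right_ball, sub_self]
  have hint (j : ℕ) : IntegrableOn (fun z ↦ g (z + a j)) (ball 0 ρ) :=
    integrableOn_ball_of_continuous_s5 (by fun_prop) _ _
  calc c * (d * volume.real (ball (0 : E) ρ))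
      ≤ c * ∫ z in ball 0 ρ, ∑ j ∈ Finset.range m, g (z + a j) := by
        gcongr
        exact setIntegral_ge_of_const_le_real measurableSet_ball measure_ball_lt_top.ne hd
          (integrable_finsetSum _ fun j _ ↦ hint j)
    _ = ∑ j ∈ Finset.range m, c * ∫ z in ball (a j) ρ, g z := by
        simp only [htranslate, integral_finsetSum _ fun j _ ↦ hint j, Finset.mul_sum]
    _ ≤ ∑ _j ∈ Finset.range m, I := Finset.sum_le_sum fun j hj ↦ hI j (Finset.mem_range.1 hj)
    _ = m * I := by simp

section StrongMaximum

variable {w : E → ℝ} {A B ρ : ℝ} {ℓ : E →L[ℝ] ℝ}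

theorem IsLevyKernel.exists_pos_mul_setIntegral_le (hK : IsLevyKernel K)
    (hpos : LocallyPositive K) (hρ : 0 < ρ) (R : ℝ) :
    ∃ c > 0, ∀ {w : E → ℝ} {A B : ℝ}, Continuous w → (∀ y, |w y| ≤ B) → (∀ y, w y ≤ A) →
      ∀ x a r, ball a r ⊆ closedBall 0 R \ ball 0 ρ →
        c * ∫ z in ball a r, (A - w (x + z)) ≤ ∫ z in (ball 0 ρ)ᶜ, K z * (A - w (x + z)) := by
  obtain ⟨c, hc, hcK⟩ := hpos R
  refine ⟨c, hc, fun {w A B} hw hB hA x a r hsub ↦ ?_⟩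
  have hint := hK.integrableOn_mul_const_sub hρ hw hB A x
  have hsub' : ball a r ⊆ (ball 0 ρ)ᶜ := fun z hz ↦ (hsub hz).2
  rw [← integral_const_mul]
  calc ∫ z in ball a r, c * (A - w (x + z))
      ≤ ∫ z in ball a r, K z * (A - w (x + z)) := by
        refine setIntegral_mono_on (integrableOn_ball_of_continuous_s5 (by fun_prop) _ _)
          (hint.mono_set hsub') measurableSet_ball fun z hz ↦ ?_
        refine mul_le_mul_of_nonneg_right (hcK z ?_ (mem_closedBall_zero_iff.1 (hsub hz).1))
          (sub_nonneg.2 (hA _))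
        rintro rfl
        exact hsub' hz (mem_ball_self hρ)
    _ ≤ ∫ z in (ball 0 ρ)ᶜ, K z * (A - w (x + z)) := by
        refine setIntegral_mono_set hint (.of_forall fun z ↦ ?_) hsub'.eventuallyLE
        exact mul_nonneg (hK.nonneg z) (sub_nonneg.2 (hA _))

theorem exists_pos_le_setIntegral_of_le_far (hK : IsLevyKernel K) (hpos : LocallyPositive K)
    (hℓ : ℓ ≠ 0) (hw : Continuous w) (hB : ∀ y, |w y| ≤ B) (hA : ∀ y, w y ≤ A) {a m : ℝ}
    (ha : a < A) (hfar : ∀ y, m ≤ |ℓ y| → w y ≤ a) (hρ : 0 < ρ) :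
    ∃ c > 0, ∀ x, c ≤ ∫ z in (ball 0 ρ)ᶜ, K z * (A - w (x + z)) := by
  have hℓ' : (ℓ : E →ₗ[ℝ] ℝ) ≠ 0 := mod_cast hℓ
  obtain ⟨b, hb : ℓ b = |m| + ‖ℓ‖ * (1 + ρ)⟩ := LinearMap.surjective hℓ' _
  have hℓpos : 0 < ‖ℓ‖ := norm_pos_iff.2 hℓ
  have hbnorm : 1 + ρ ≤ ‖b‖ := by
    refine le_of_mul_le_mul_left ?_ hℓpos
    linarith [(le_abs_self _).trans (ℓ.le_opNorm b), abs_nonneg m]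
  obtain ⟨c, hc, hcK⟩ := hK.exists_pos_mul_setIntegral_le hpos hρ (‖b‖ + 1)
  have hdir (x : E) : ∃ b', ‖b'‖ = ‖b‖ ∧ |m| + ‖ℓ‖ ≤ |ℓ (x + b')| := by
    have hℓb : |m| + ‖ℓ‖ ≤ ℓ b := by nlinarith
    rcases le_total 0 (ℓ x) with hx | hx
    · exact ⟨b, rfl, le_abs.2 <| .inl <| by rw [map_add]; linarith⟩
    · exact ⟨-b, norm_neg b, le_abs.2 <| .inr <| by rw [map_add, map_neg]; linarith⟩
  refine ⟨c * ((A - a) * volume.real (ball (0 : E) 1)),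
    mul_pos hc (mul_pos (sub_pos.2 ha) (volume_real_ball_pos one_pos)), fun x ↦ ?_⟩
  obtain ⟨b', hb'norm, hb'⟩ := hdir x
  refine le_trans ?_ (hcK hw hB hA x b' 1 <|
    ball_subset_closedBall_sdiff_ball (by rwa [hb'norm]) (by rw [hb'norm]))
  rw [← Measure.addHaar_real_ball_center volume b']
  refine mul_le_mul_of_nonneg_left (setIntegral_ge_of_const_le_real measurableSet_ball
    measure_ball_lt_top.ne (fun z hz ↦ ?_)
    (integrableOn_ball_of_continuous_s5 (by fun_prop) _ _)) hc.le
  have hz : |ℓ (z - b')| ≤ ‖ℓ‖ * 1 := ℓ.le_opNorm_of_le (mem_ball_iff_norm.1 hz).le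
  have hxz : ℓ (x + b') = ℓ (x + z) - ℓ (z - b') := by simp only [map_add, map_sub]; ring
  rw [hxz] at hb'
  have := hfar (x + z) (by linarith [abs_sub (ℓ (x + z)) (ℓ (z - b')), le_abs_self m])
  linarith

/-- A quantitative strong maximum principle. The differences `slideDiff u v` telescope along a
chain of translates by `v` joining the two sides of a slab, across which `u` increases by `d`, so
they cannot all be close to an upper bound `A ≥ 0` in a neighbourhood of the chain. -/
theorem exists_pos_le_setIntegral_sub_slideDiff (hK : IsLevyKernel K) (hpos : LocallyPositive K)
    {u : E → ℝ} (hu : Continuous u) (hB : ∀ y, |u y| ≤ B) {d L : ℝ} (hd : 0 < d)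
    (hcross : ∀ y y', ℓ y ≤ -L → L ≤ ℓ y' → u y + d ≤ u y') (hρ : 0 < ρ) {m : ℝ} (hm : 0 < m)
    (R X : ℝ) :
    ∃ η > 0, ∀ v, 4 * ρ ≤ ‖v‖ → ‖v‖ ≤ R → m ≤ ℓ v → ∀ x, |ℓ x| ≤ X → ∀ A, 0 ≤ A →
      (∀ y, slideDiff u v y ≤ A) →
      η ≤ ∫ z in (ball 0 ρ)ᶜ, K z * (A - slideDiff u v (x + z)) := by
  obtain ⟨N, hN⟩ := exists_nat_ge ((L + X + ‖ℓ‖ * ρ) / m)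
  rw [div_le_iff₀ hm] at hN
  obtain ⟨c, hc, hcK⟩ := hK.exists_pos_mul_setIntegral_le hpos hρ ((N + 1 / 2) * R + ρ)
  refine ⟨c * (d * volume.real (ball (0 : E) ρ)) / (2 * N + 1 : ℕ),
    div_pos (mul_pos hc (mul_pos hd (volume_real_ball_pos hρ))) (by positivity),
    fun v hvρ hvR hmv x hx A hA hle ↦ ?_⟩
  have hlower (j : ℕ) : 1 / 2 ≤ |(j : ℝ) - (N + 1 / 2)| := by
    rcases Nat.lt_or_ge N j with h | h
    · have : (N : ℝ) + 1 ≤ j := mod_cast h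
      exact le_abs.2 (.inl (by linarith))
    · have : (j : ℝ) ≤ N := mod_cast h
      exact le_abs.2 (.inr (by linarith))
  have hupper (j : ℕ) (hj : j < 2 * N + 1) : |(j : ℝ) - (N + 1 / 2)| ≤ N + 1 / 2 := by
    have : (j : ℝ) ≤ 2 * N := mod_cast Nat.lt_succ_iff.1 hj
    exact abs_le.2 ⟨by linarith [j.cast_nonneg (α := ℝ)], by linarith⟩
  have hD := continuous_slideDiff hu v
  rw [div_le_iff₀ (by positivity), mul_comm (∫ z in _, _)]
  refine mul_volume_ball_le_of_le_sum_translates (g := fun z ↦ A - slideDiff u v (x + z))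
    (a := fun j ↦ ((j : ℝ) - (N + 1 / 2)) • v) (by fun_prop) hc.le (fun j hj ↦ ?_) fun z hz ↦ ?_
  · refine hcK hD (abs_slideDiff_le hB v) hle x _ _ (ball_subset_closedBall_sdiff_ball ?_ ?_)
    · rw [norm_smul, Real.norm_eq_abs]
      linarith [mul_le_mul (hlower j) hvρ (by positivity) (by positivity)]
    · rw [norm_smul, Real.norm_eq_abs]
      gcongr
      exact hupper j hj
  · simp only [← add_assoc]
    refine le_sum_sub_slideDiff hcross hA ?_
    have hz : |ℓ z| ≤ ‖ℓ‖ * ρ := ℓ.le_opNorm_of_le (mem_ball_zero_iff.1 hz).le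
    have hxz : |ℓ (x + z)| ≤ X + ‖ℓ‖ * ρ := by
      rw [map_add]
      exact (abs_add_le _ _).trans (add_le_add hx hz)
    have : (N : ℝ) * m ≤ (N + 1 / 2) * ℓ v := by gcongr; linarith
    linarith

end StrongMaximum

/-! ### Layer solutions and the sliding method -/

/-- A layer solution of `L_K u = f(u)`: continuous, with values in `[-1, 1]`, and tending to `±1` as
`ℓ → ±∞`. Convergence along `comap ℓ atTop` is convergence uniform on the level sets of `ℓ`. -/
structure IsLayerSolution (K : E → ℝ) (f : ℝ → ℝ) (ℓ : E →L[ℝ] ℝ) (u : E → ℝ) : Prop where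
  continuous : Continuous u
  abs_le_one : ∀ x, |u x| ≤ 1
  hasLevyOp : ∀ x, HasLevyOp K u x (f (u x))
  tendsto_one : Tendsto u (comap ℓ atTop) (𝓝 1)
  tendsto_neg_one : Tendsto u (comap ℓ atBot) (𝓝 (-1))

/-- `f` is nonincreasing near both ends of `[-1, 1]`, the stability condition at the limits. -/
def AntitoneNearEnds (f : ℝ → ℝ) : Prop :=
  ∃ δ > (0 : ℝ), AntitoneOn f (Icc (-1) (-1 + δ)) ∧ AntitoneOn f (Icc (1 - δ) 1)

theorem forall_ge_of_forall_add_imp {P : ℝ → Prop} {a T σ : ℝ} (hσ : 0 < σ)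
    (hT : ∀ t, a ≤ t → T ≤ t → P t) (hstep : ∀ t, a ≤ t → P (t + σ) → P t) :
    ∀ t, a ≤ t → P t := by
  have hind (k : ℕ) : ∀ t, a ≤ t → T ≤ t + k * σ → P t := by
    induction k with
    | zero => simpa using hT
    | succ k ih =>
      intro t ht hTt
      push_cast at hTt
      exact hstep t ht (ih _ (by linarith) (by linarith))
  intro t ht
  obtain ⟨k, hk⟩ := exists_nat_ge ((T - t) / σ)
  rw [div_le_iff₀ hσ] at hk
  exact hind k t ht (by linarith)

namespace IsLayerSolution

variable {f : ℝ → ℝ} {ℓ : E →L[ℝ] ℝ} {u : E → ℝ} {δ : ℝ}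

theorem exists_transition (hu : IsLayerSolution K f ℓ u) (hδ : 0 < δ) :
    ∃ M, (∀ y, M ≤ ℓ y → 1 - δ ≤ u y) ∧ ∀ y, ℓ y ≤ -M → u y ≤ -1 + δ := by
  have htop : ∀ᶠ y in comap ℓ atTop, 1 - δ ≤ u y :=
    hu.tendsto_one.eventually_const_le (by linarith)
  have hbot : ∀ᶠ y in comap ℓ atBot, u y ≤ -1 + δ :=
    hu.tendsto_neg_one.eventually_le_const (by linarith)
  obtain ⟨a, -, ha⟩ := (atTop_basis.comap ℓ).eventually_iff.1 htop
  obtain ⟨b, -, hb⟩ := (atBot_basis.comap ℓ).eventually_iff.1 hbot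
  exact ⟨max a (-b), fun y hy ↦ ha ((le_max_left _ _).trans hy),
    fun y hy ↦ hb (by simpa using hy.trans (neg_le.1 (le_max_right a (-b))))⟩

theorem mem_Icc (hu : IsLayerSolution K f ℓ u) (x : E) : u x ∈ Icc (-1) 1 :=
  abs_le.1 (hu.abs_le_one x)

theorem uniformContinuous (hu : IsLayerSolution K f ℓ u) (hK : IsLevyKernel K)
    (hinf : ¬ Integrable K) (hf : ContinuousOn f (Icc (-1) 1)) : UniformContinuous u := by
  obtain ⟨C, hC⟩ := isCompact_Icc.exists_bound_of_continuousOn hf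
  exact uniformContinuous_of_hasLevyOp hK hinf hu.continuous hu.abs_le_one
    (fun x ↦ hC _ (hu.mem_Icc x)) hu.hasLevyOp

theorem exists_slideDiff_le_of_le_abs (hu : IsLayerSolution K f ℓ u) (hδ : 0 < δ) {v : E}
    (hv : 0 ≤ ℓ v) : ∃ m, ∀ y, m ≤ |ℓ y| → slideDiff u v y ≤ δ := by
  obtain ⟨m, htop, hbot⟩ := hu.exists_transition hδ
  refine ⟨m, fun y hy ↦ ?_⟩
  unfold slideDiff
  rcases le_abs.1 hy with hy | hy
  · linarith [(hu.mem_Icc y).2, htop (y + v) (by rw [map_add]; linarith)]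
  · linarith [(hu.mem_Icc (y + v)).1, hbot y (by linarith)]

/-- Where `u` takes values near `±1` the monotonicity of `f` has the wrong sign for an almost
maximum of `slideDiff u v`, which is therefore attained where `-M < ℓ x` and `ℓ (x + v) < M`. -/
theorem exists_mem_slab (hu : IsLayerSolution K f ℓ u) (hK : IsLevyKernel K)
    (hpos : LocallyPositive K) (hf : AntitoneNearEnds f) (hℓ : ℓ ≠ 0) :
    ∃ M, ∀ {v A ρ κ}, 0 ≤ ℓ v → IsLUB (range (slideDiff u v)) A → 0 < A → 0 < ρ → 0 < κ →
      ∃ x, -M < ℓ x ∧ ℓ (x + v) < M ∧ 0 < slideDiff u v x ∧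
        ∫ z in (ball 0 ρ)ᶜ, K z * (A - slideDiff u v (x + z)) ≤
          f (u x) - f (u (x + v)) + κ := by
  obtain ⟨δ, hδ, hfbot, hftop⟩ := hf
  obtain ⟨M, hMtop, hMbot⟩ := hu.exists_transition hδ
  refine ⟨M, fun {v A ρ κ} hv hA hA0 hρ hκ ↦ ?_⟩
  have hD := continuous_slideDiff hu.continuous v
  have hDB := abs_slideDiff_le hu.abs_le_one v
  obtain ⟨m, hm⟩ := hu.exists_slideDiff_le_of_le_abs (half_pos hA0) hv
  obtain ⟨c, hc, hcI⟩ := exists_pos_le_setIntegral_of_le_far hK hpos hℓ hD hDB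
    (fun y ↦ hA.1 (mem_range_self y)) (half_lt_self hA0) hm hρ
  obtain ⟨κ', hκ', hκκ, hκA, hκc⟩ : ∃ κ' > 0, κ' ≤ κ ∧ κ' ≤ A ∧ κ' < c :=
    ⟨min κ (min A (c / 2)), by positivity, by simp, by simp, by grind⟩
  obtain ⟨x, hxA, hxI⟩ := exists_setIntegral_compl_ball_le_of_isLUB hK hD hDB
    (HasLevyOp.slideDiff hK hu.continuous hu.abs_le_one hu.hasLevyOp v) hA hρ hκ'
  have hx : 0 < slideDiff u v x := by linarith
  have hf : f (u (x + v)) < f (u x) := by linarith [hcI x]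
  have hlt : u (x + v) < u x := sub_pos.1 hx
  refine ⟨x, lt_of_not_ge fun hxM ↦ ?_, lt_of_not_ge fun hxM ↦ ?_, hx, hxI.trans (by linarith)⟩
  · have hux := hMbot x hxM
    exact hf.not_ge (hfbot ⟨(hu.mem_Icc _).1, by linarith⟩ ⟨(hu.mem_Icc _).1, hux⟩ hlt.le)
  · have huxv := hMtop _ hxM
    exact hf.not_ge (hftop ⟨huxv, (hu.mem_Icc _).2⟩ ⟨by linarith, (hu.mem_Icc _).2⟩ hlt.le)

theorem exists_slideDiff_nonpos_of_le (hu : IsLayerSolution K f ℓ u) (hK : IsLevyKernel K)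
    (hpos : LocallyPositive K) (hf : AntitoneNearEnds f) (hℓ : ℓ ≠ 0) :
    ∃ T, ∀ v, 0 ≤ ℓ v → T ≤ ℓ v → ∀ y, slideDiff u v y ≤ 0 := by
  obtain ⟨M, hM⟩ := hu.exists_mem_slab hK hpos hf hℓ
  refine ⟨2 * M, fun v hv hMv y ↦ ?_⟩
  obtain ⟨A, hA⟩ := exists_isLUB_range_slideDiff hu.abs_le_one v
  refine (hA.1 (mem_range_self y)).trans (le_of_not_gt fun hA0 ↦ ?_)
  obtain ⟨x, hMx, hxM, -⟩ := hM hv hA hA0 one_pos one_pos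
  rw [map_add] at hxM
  linarith

theorem exists_pos_le_setIntegral (hu : IsLayerSolution K f ℓ u) (hK : IsLevyKernel K)
    (hpos : LocallyPositive K) {ρ m : ℝ} (hρ : 0 < ρ) (hm : 0 < m) (R X : ℝ) :
    ∃ η > 0, ∀ v, 4 * ρ ≤ ‖v‖ → ‖v‖ ≤ R → m ≤ ℓ v → ∀ x, |ℓ x| ≤ X → ∀ A, 0 ≤ A →
      (∀ y, slideDiff u v y ≤ A) →
      η ≤ ∫ z in (ball 0 ρ)ᶜ, K z * (A - slideDiff u v (x + z)) := by
  obtain ⟨L, htop, hbot⟩ := hu.exists_transition (half_pos one_pos)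
  exact exists_pos_le_setIntegral_sub_slideDiff hK hpos hu.continuous hu.abs_le_one one_pos
    (fun y y' hy hy' ↦ by linarith [hbot y hy, htop y' hy']) hρ hm R X

/-- A positive supremum of `slideDiff u v` is bounded away from zero, uniformly for `v` in a
bounded set on which `ℓ` is bounded away from zero. -/
theorem exists_pos_slideDiff_nonpos (hu : IsLayerSolution K f ℓ u) (hK : IsLevyKernel K)
    (hpos : LocallyPositive K) (hfc : ContinuousOn f (Icc (-1) 1)) (hf : AntitoneNearEnds f)
    (hℓ : ℓ ≠ 0) {m : ℝ} (hm : 0 < m) (R : ℝ) :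
    ∃ θ > 0, ∀ v, ‖v‖ ≤ R → m ≤ ℓ v → (∀ y, slideDiff u v y ≤ θ) →
      ∀ y, slideDiff u v y ≤ 0 := by
  obtain ⟨M, hM⟩ := hu.exists_mem_slab hK hpos hf hℓ
  have hℓpos : 0 < ‖ℓ‖ := norm_pos_iff.2 hℓ
  obtain ⟨ρ, hρ, hρm⟩ : ∃ ρ > 0, ‖ℓ‖ * (4 * ρ) = m := ⟨m / (4 * ‖ℓ‖), by positivity, by field_simp⟩
  obtain ⟨η, hη, hchain⟩ := hu.exists_pos_le_setIntegral hK hpos hρ hm R M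
  obtain ⟨θ, hθ, hfθ⟩ := Metric.uniformContinuousOn_iff_le.1
    (isCompact_Icc.uniformContinuousOn_of_continuous hfc) (η / 3) (by positivity)
  refine ⟨θ, hθ, fun v hvR hmv hvθ y ↦ ?_⟩
  obtain ⟨A, hA⟩ := exists_isLUB_range_slideDiff hu.abs_le_one v
  have hleA (y) : slideDiff u v y ≤ A := hA.1 (mem_range_self y)
  refine (hleA y).trans (le_of_not_gt fun hA0 ↦ ?_)
  obtain ⟨x, hMx, hxM, hx, hxI⟩ := hM (hm.le.trans hmv) hA hA0 hρ (show 0 < η / 3 by positivity)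
  have hρv : 4 * ρ ≤ ‖v‖ := by
    refine le_of_mul_le_mul_left ?_ hℓpos
    exact (hρm.trans_le hmv).trans ((le_abs_self _).trans (ℓ.le_opNorm v))
  have hxM' : |ℓ x| ≤ M := by
    rw [map_add] at hxM
    exact abs_le.2 ⟨hMx.le, by linarith⟩
  have hfx : f (u x) - f (u (x + v)) ≤ η / 3 :=
    (le_abs_self _).trans <| hfθ _ (hu.mem_Icc _) _ (hu.mem_Icc _) <|
      (abs_of_pos hx).trans_le (hvθ x)
  linarith [hchain v hρv hvR hmv x hxM' A hA0.le hleA]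

theorem le_apply_add (hu : IsLayerSolution K f ℓ u) (hK : IsLevyKernel K)
    (hinf : ¬ Integrable K) (hpos : LocallyPositive K) (hfc : ContinuousOn f (Icc (-1) 1))
    (hf : AntitoneNearEnds f) {h : E} (hh : 0 < ℓ h) (x : E) : u x ≤ u (x + h) := by
  have hℓ : ℓ ≠ 0 := fun h0 ↦ hh.ne' (by simp [h0])
  obtain ⟨T, hT⟩ := hu.exists_slideDiff_nonpos_of_le hK hpos hf hℓ
  obtain ⟨θ, hθ, hgap⟩ := hu.exists_pos_slideDiff_nonpos hK hpos hfc hf hℓ hh (T / ℓ h * ‖h‖)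
  obtain ⟨r, hr, hur⟩ := Metric.uniformContinuous_iff.1 (hu.uniformContinuous hK hinf hfc) θ hθ
  obtain ⟨σ, hσ, hσr⟩ : ∃ σ > 0, σ * ‖h‖ < r := by
    refine ⟨r / (‖h‖ + 1), by positivity, ?_⟩
    rw [div_mul_eq_mul_div, div_lt_iff₀ (by positivity)]
    linarith
  have hlarge (t : ℝ) (ht : 1 ≤ t) (hTt : T / ℓ h ≤ t) : ∀ y, slideDiff u (t • h) y ≤ 0 := by
    refine hT _ ?_ ?_ <;> rw [map_smul, smul_eq_mul]
    · positivity
    · rwa [div_le_iff₀ hh] at hTt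
  have hslide := forall_ge_of_forall_add_imp hσ hlarge fun t ht hnext y ↦ by
    rcases le_total (T / ℓ h) t with hTt | htT
    · exact hlarge t ht hTt y
    refine hgap (t • h) ?_ ?_ (fun y ↦ ?_) y
    · rw [norm_smul, Real.norm_of_nonneg (by linarith)]
      gcongr
    · rw [map_smul, smul_eq_mul]
      exact le_mul_of_one_le_left hh.le ht
    · have hclose : dist (u (y + (t + σ) • h)) (u (y + t • h)) < θ := by
        refine hur ?_
        rwa [dist_add_left, add_smul, dist_self_add_left, norm_smul, Real.norm_of_nonneg hσ.le]
      have := hnext y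
      unfold slideDiff at this ⊢
      linarith [le_of_abs_le hclose.le]
  simpa [slideDiff] using hslide 1 le_rfl x

theorem lt_apply_add (hu : IsLayerSolution K f ℓ u) (hK : IsLevyKernel K)
    (hinf : ¬ Integrable K) (hpos : LocallyPositive K) (hfc : ContinuousOn f (Icc (-1) 1))
    (hf : AntitoneNearEnds f) {h : E} (hh : 0 < ℓ h) (x : E) : u x < u (x + h) := by
  have hle (y : E) : slideDiff u h y ≤ 0 :=
    sub_nonpos.2 (hu.le_apply_add hK hinf hpos hfc hf hh y)
  refine (sub_nonpos.1 (hle x)).lt_of_ne fun heq ↦ ?_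
  have h0 : slideDiff u h x = 0 := sub_eq_zero.2 heq
  have hh0 : h ≠ 0 := by
    rintro rfl
    simp at hh
  have hρ : 0 < ‖h‖ / 4 := by positivity
  obtain ⟨η, hη, hchain⟩ := hu.exists_pos_le_setIntegral hK hpos hρ hh ‖h‖ |ℓ x|
  have hL := HasLevyOp.slideDiff hK hu.continuous hu.abs_le_one hu.hasLevyOp h x
  have htouch := hL.setIntegral_compl_ball_le hK (continuous_slideDiff hu.continuous h)
    (abs_slideDiff_le hu.abs_le_one h) hρ le_rfl 0 fun z _ ↦ by simpa [h0] using hle (x + z)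
  rw [h0, heq, sub_self, zero_mul, add_zero] at htouch
  linarith [hchain h (by linarith) le_rfl le_rfl x le_rfl 0 le_rfl hle]

end IsLayerSolution

theorem exists_strictMono_comp {V : Type*} [NormedAddCommGroup V] [NormedSpace ℝ V] {u : V → ℝ}
    (hu : Continuous u) {ℓ : V →L[ℝ] ℝ} (hℓ : ℓ ≠ 0) (hlt : ∀ x y, ℓ x < ℓ y → u x < u y) :
    ∃ g : ℝ → ℝ, StrictMono g ∧ ∀ x, u x = g (ℓ x) := by
  have hℓ' : (ℓ : V →ₗ[ℝ] ℝ) ≠ 0 := mod_cast hℓ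
  obtain ⟨e, he : ℓ e = 1⟩ := LinearMap.surjective hℓ' 1
  have hle (x y : V) (hxy : ℓ x = ℓ y) : u x ≤ u y := by
    have hlim : Tendsto (fun t : ℝ ↦ u (y + t • e)) (𝓝[>] 0) (𝓝 (u y)) :=
      ((by fun_prop : Continuous fun t : ℝ ↦ u (y + t • e)).tendsto' 0 _ (by simp)).mono_left
        nhdsWithin_le_nhds
    refine ge_of_tendsto hlim ?_
    filter_upwards [self_mem_nhdsWithin] with t (ht : 0 < t)
    exact (hlt _ _ (by simpa [hxy, he] using ht)).le
  refine ⟨fun t ↦ u (t • e), fun s t hst ↦ hlt _ _ (by simpa [he] using hst), fun x ↦ ?_⟩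
  have hx : ℓ x = ℓ (ℓ x • e) := by simp [he]
  exact (hle _ _ hx).antisymm (hle _ _ hx.symm)

theorem one_dimensional_symmetry_whole_space_general {K : E → ℝ} (hK : IsLevyKernel K)
    (hinf : ¬ Integrable K) (hpos : LocallyPositive K) {f : ℝ → ℝ}
    (hfc : ContinuousOn f (Icc (-1) 1)) (hf : AntitoneNearEnds f) {ℓ : E →L[ℝ] ℝ} (hℓ : ℓ ≠ 0)
    {u : E → ℝ} (hu : IsLayerSolution K f ℓ u) :
    ∃ g : ℝ → ℝ, StrictMono g ∧ ∀ x, u x = g (ℓ x) :=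
  exists_strictMono_comp hu.continuous hℓ fun x y hxy ↦ by
    simpa using hu.lt_apply_add hK hinf hpos hfc hf (h := y - x) (by simpa using hxy) x

/-! ### The kernel of the fractional Laplacian -/

/-- The kernel `C |z|^{-(d+2s)}`, `d = dim V`, of the fractional Laplacian. At `z = 0` its value is
the junk `C / 0 = 0` when `d + 2s ≠ 0`. -/
def fracKernel {V : Type*} [NormedAddCommGroup V] [NormedSpace ℝ V] (C s : ℝ) (z : V) : ℝ :=
  C / ‖z‖ ^ ((finrank ℝ V : ℝ) + 2 * s)

section FracKernel

variable {C s : ℝ}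

theorem pow_sub_one_mul_div_rpow {d : ℕ} (hd : 0 < d) {r : ℝ} (hr : 0 < r) :
    r ^ (d - 1) * (C / r ^ ((d : ℝ) + 2 * s)) = C * r ^ (-1 - 2 * s) := by
  rw [div_eq_mul_inv, ← Real.rpow_neg hr.le, ← Real.rpow_natCast, Nat.cast_pred hd,
    mul_left_comm, ← Real.rpow_add hr]
  ring_nf

theorem integrableOn_Ioi_min_one_sq_mul_rpow (hs : s ∈ Ioo (0 : ℝ) 1) :
    IntegrableOn (fun r : ℝ ↦ min 1 (r ^ 2) * (C * r ^ (-1 - 2 * s))) (Ioi 0) := by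
  obtain ⟨hs0, hs1⟩ := hs
  rw [← Ioo_union_Ici_eq_Ioi one_pos, integrableOn_union, integrableOn_Ici_iff_integrableOn_Ioi]
  constructor
  · have hnear : IntegrableOn (fun r : ℝ ↦ C * r ^ (1 - 2 * s)) (Ioo 0 1) :=
      ((intervalIntegral.integrableOn_Ioo_rpow_iff one_pos).2 (by linarith)).const_mul C
    refine hnear.congr_fun (fun r ⟨hr0, hr1⟩ ↦ ?_) measurableSet_Ioo
    simp only
    rw [min_eq_right (pow_le_one₀ hr0.le hr1.le), mul_left_comm, ← Real.rpow_natCast,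
      ← Real.rpow_add hr0]
    congr 2
    push_cast
    ring
  · have hfar : IntegrableOn (fun r : ℝ ↦ C * r ^ (-1 - 2 * s)) (Ioi 1) :=
      (integrableOn_Ioi_rpow_of_lt (by linarith) one_pos).const_mul C
    refine hfar.congr_fun (fun r (hr : 1 < r) ↦ ?_) measurableSet_Ioi
    simp only [min_eq_left (one_le_pow₀ hr.le), one_mul]

theorem isLevyKernel_fracKernel [Nontrivial E] (hC : 0 ≤ C) (hs : s ∈ Ioo (0 : ℝ) 1) :
    IsLevyKernel (fracKernel C s : E → ℝ) where
  measurable := by unfold fracKernel; fun_prop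
  nonneg z := by unfold fracKernel; positivity
  even z := by simp only [fracKernel, norm_neg]
  integrable_min_mul := by
    refine (integrable_fun_norm_addHaar (E := E) volume
      (f := fun r ↦ min 1 (r ^ 2) * (C / r ^ ((finrank ℝ E : ℝ) + 2 * s)))).2 ?_
    refine (integrableOn_Ioi_min_one_sq_mul_rpow (C := C) hs).congr_fun (fun r hr ↦ ?_)
      measurableSet_Ioi
    simp only [smul_eq_mul]
    rw [mul_left_comm (r ^ _), pow_sub_one_mul_div_rpow finrank_pos hr]

theorem not_integrable_fracKernel [Nontrivial E] (hC : C ≠ 0) :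
    ¬ Integrable (fracKernel C s : E → ℝ) := by
  intro hint
  have hrad := (integrable_fun_norm_addHaar (E := E) volume
    (f := fun r ↦ C / r ^ ((finrank ℝ E : ℝ) + 2 * s))).1 hint
  refine not_integrableOn_Ioi_rpow (-1 - 2 * s) ?_
  refine IntegrableOn.congr_fun (hrad.const_mul C⁻¹) (fun r hr ↦ ?_) measurableSet_Ioi
  simp only [smul_eq_mul]
  rw [pow_sub_one_mul_div_rpow finrank_pos hr, inv_mul_cancel_left₀ hC]

theorem locallyPositive_fracKernel {V : Type*} [NormedAddCommGroup V] [NormedSpace ℝ V]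
    (hC : 0 < C) (hs : 0 ≤ s) : LocallyPositive (fracKernel C s : V → ℝ) := by
  refine fun R ↦ ⟨C / (max 1 R) ^ ((finrank ℝ V : ℝ) + 2 * s), by positivity, fun z hz hzR ↦ ?_⟩
  have : 0 < ‖z‖ := norm_pos_iff.2 hz
  unfold fracKernel
  gcongr
  exact hzR.trans (le_max_right _ _)

end FracKernel

theorem HasFracLap.hasLevyOp {n : ℕ} {s C : ℝ} {u : Pt n → ℝ} {x : Pt n} {L : ℝ}
    (h : HasFracLap n s C u x L) : HasLevyOp (fracKernel C s) u x L := by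
  refine Tendsto.congr (fun ε ↦ ?_) h
  have hpre : (x + ·) ⁻¹' {y : Pt n | ε ≤ dist x y} = (ball 0 ε)ᶜ := by
    ext z
    simp
  rw [← integral_const_mul, ← hpre, ← (measurePreserving_add_left volume x).setIntegral_preimage_emb
    (measurableEmbedding_addLeft x)]
  simp only [fracKernel, dist_self_add_right, finrank_euclideanSpace, Fintype.card_fin]
  congr 1 with z
  ring

theorem C11loc.continuousOn {n : ℕ} {u : Pt n → ℝ} {D : Set (Pt n)} (hu : C11loc n u D) :
    ContinuousOn u D := by
  intro x hx
  obtain ⟨ε, hε, -, hdiff, -⟩ := hu x hx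
  exact (hdiff.differentiableAt (ball_mem_nhds x hε)).continuousAt.continuousWithinAt

theorem isLayerSolution_fracKernel {n : ℕ} {i : Fin n} {s C : ℝ} {f : ℝ → ℝ} {u : Pt n → ℝ}
    (hu : Continuous u) (hub : ∀ x, |u x| ≤ 1) (heq : ∀ x, HasFracLap n s C u x (f (u x)))
    (hlim : ∀ ε > (0 : ℝ), ∃ M > (0 : ℝ), ∀ x : Pt n,
      (M < x i → |u x - 1| < ε) ∧ (x i < -M → |u x + 1| < ε)) :
    IsLayerSolution (fracKernel C s) f (EuclideanSpace.proj i) u where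
  continuous := hu
  abs_le_one := hub
  hasLevyOp x := (heq x).hasLevyOp
  tendsto_one := by
    refine Metric.tendsto_nhds.2 fun ε hε ↦ ?_
    obtain ⟨M, -, hM⟩ := hlim ε hε
    filter_upwards [preimage_mem_comap (Ioi_mem_atTop M)] with x hx using (hM x).1 hx
  tendsto_neg_one := by
    refine Metric.tendsto_nhds.2 fun ε hε ↦ ?_
    obtain ⟨M, -, hM⟩ := hlim ε hε
    filter_upwards [preimage_mem_comap (Iio_mem_atBot (-M))] with x hx
    rw [Real.dist_eq, sub_neg_eq_add]
    exact (hM x).2 hx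

theorem euclideanSpace_proj_ne_zero {ι : Type*} (i : ι) :
    (EuclideanSpace.proj i : EuclideanSpace ℝ ι →L[ℝ] ℝ) ≠ 0 := by
  classical
  intro h
  simpa using DFunLike.congr_fun h (EuclideanSpace.single i 1)

/-- One-dimensional symmetry: a solution as in the De Giorgi setting depends on `x_n` only,
through a strictly increasing profile. -/
theorem one_dimensional_symmetry_whole_space
    (n : ℕ) (hn : 0 < n) (s : ℝ) (hs : s ∈ Set.Ioo (0 : ℝ) 1) (Cns : ℝ) (hCns : 0 < Cns)
    (f : ℝ → ℝ) (hfc : ContinuousOn f (Set.Icc (-1 : ℝ) 1))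
    (hfmono : ∃ δ > (0 : ℝ), AntitoneOn f (Set.Icc (-1 : ℝ) (-1 + δ)) ∧
      AntitoneOn f (Set.Icc (1 - δ) (1 : ℝ)))
    (u : Pt n → ℝ) (huL : MemL2s n s u) (huC : C11loc n u Set.univ)
    (heq : ∀ x : Pt n, HasFracLap n s Cns u x (f (u x)))
    (hub : ∀ x : Pt n, |u x| ≤ 1)
    (hlim : ∀ ε > (0 : ℝ), ∃ M > (0 : ℝ), ∀ x : Pt n,
      (M < x (lastIdx n hn) → |u x - 1| < ε) ∧ (x (lastIdx n hn) < -M → |u x + 1| < ε)) :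
    ∃ g : ℝ → ℝ, StrictMono g ∧ ∀ x : Pt n, u x = g (x (lastIdx n hn)) := by
  have : Nonempty (Fin n) := ⟨lastIdx n hn⟩
  exact one_dimensional_symmetry_whole_space_general (isLevyKernel_fracKernel hCns.le hs)
    (not_integrable_fracKernel hCns.ne') (locallyPositive_fracKernel hCns hs.1.le) hfc hfmono
    (euclideanSpace_proj_ne_zero _)
    (isLayerSolution_fracKernel (continuousOn_univ.1 huC.continuousOn) hub heq hlim)
end
end

section
/- Monotonicity in the half space: Let ℝ^n_+ = {x = (x', x_n) ∈ ℝ^n : x_n > 0}. Let f : ℝ → ℝ be nonincreasing, and let u ∈ L_{2s} ∩ C^{1,1}_loc(ℝ^n_+) be continuous on the closure of ℝ^n_+, bounded, and satisfy (-Δ)^s u(x) = f(u(x)) for all x ∈ ℝ^n_+, u(x) > 0 for all x ∈ ℝ^n_+, and u(x) = 0 for all x ∈ ℝ^n \ ℝ^n_+. Then u is strictly monotone increasing in the x_n-direction: for every x = (x', x_n) ∈ ℝ^n_+ and every τ > 0, u(x', x_n + τ) > u(x', x_n). -/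
open MeasureTheory Filter Metric Set

noncomputable section

/-!
Write the half space as `{ℓ > 0}` and compare `u` with its translate by `t`, `ℓ t > 0`. As `f` is
antitone, `w = u - u (· + t)` satisfies `(-Δ)^s w ≤ 0` wherever `w > 0`, and `w ≤ 0` off the half
space.

The supremum `m` of `w` need not be attained, so suppose `m > 0` and take `a` with `w a` close to
`m`. Rescale around `a` by its height `ℓ a`: then a fixed share of the kernel lies over points where
`w ≤ 0`. Adding `ε` times a bump produces a point near `a` at which the second differences of `w`
are at least `-O(ε) min(1, ‖z‖²)`, and at least `m - O(ε)` on that share. So `(-Δ)^s w > 0` there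
for small `ε`, a contradiction. Hence `w ≤ 0`. If `w` vanished somewhere in the half space it would
attain its maximum there and so be constant, whereas `w < 0` on the boundary hyperplane.
-/

section Topology

variable {X Y : Type*} [TopologicalSpace X] [TopologicalSpace Y]

theorem continuous_of_continuousOn_closure_of_continuousOn_compl {g : X → Y} {S : Set X}
    (hS : IsOpen S) (hclosure : ContinuousOn g (closure S)) (hcompl : ContinuousOn g Sᶜ) :
    Continuous g := by
  rw [← continuousOn_univ]
  refine (hclosure.union_of_isClosed hcompl isClosed_closure hS.isClosed_compl).mono ?_
  rw [← union_compl_self S]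
  exact union_subset_union_left _ subset_closure

end Topology

section LevyWeight

variable {E : Type*} [NormedAddCommGroup E]

/-- The kernel `‖z‖ ^ (-p)` damped by `min 1 ‖z‖²`, as in the Lévy integrability condition. For
`p = n + 2s` it is the size of the second differences of a fixed smooth bump against the kernel of
`(-Δ)^s`. -/
def levyWeight (p : ℝ) (z : E) : ℝ := min 1 (‖z‖ ^ 2) / ‖z‖ ^ p

theorem levyWeight_nonneg (p : ℝ) (z : E) : 0 ≤ levyWeight p z := by
  unfold levyWeight; positivity

theorem levyWeight_pos (p : ℝ) {z : E} (hz : z ≠ 0) : 0 < levyWeight p z := by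
  have : 0 < ‖z‖ := norm_pos_iff.2 hz
  unfold levyWeight; positivity

variable [NormedSpace ℝ E] [FiniteDimensional ℝ E] [MeasurableSpace E] [BorelSpace E]
  (μ : Measure E) [μ.IsAddHaarMeasure] {p : ℝ}

theorem integrableOn_dist_rpow_neg (hp : Module.finrank ℝ E < p) (x : E) {δ : ℝ} (hδ : 0 < δ) :
    IntegrableOn (fun y => dist x y ^ (-p)) {y | δ ≤ dist x y} μ := by
  have hdom := ((integrable_one_add_norm (μ := μ) hp).comp_sub_left x).const_mul ((1 + δ⁻¹) ^ p)
  refine hdom.integrableOn.mono' (by fun_prop : Measurable _).aestronglyMeasurable ?_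
  refine ae_restrict_of_forall_mem (measurableSet_le (by fun_prop) (by fun_prop)) fun y hy => ?_
  have hp0 : 0 ≤ p := (Nat.cast_nonneg _).trans hp.le
  have hy0 : 0 < dist x y := hδ.trans_le hy
  have hscale : 1 + dist x y ≤ (1 + δ⁻¹) * dist x y := by
    have : 1 ≤ δ⁻¹ * dist x y := by rw [← inv_mul_cancel₀ hδ.ne']; gcongr; exact hy
    linarith
  rw [← dist_eq_norm, Real.norm_of_nonneg (by positivity), Real.rpow_neg hy0.le,
    Real.rpow_neg (by positivity), ← div_eq_mul_inv, inv_le_comm₀ (by positivity) (by positivity),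
    inv_div, div_le_iff₀ (by positivity), mul_comm, ← Real.mul_rpow (by positivity) hy0.le]
  gcongr

theorem integrableOn_sub_div_dist_rpow (hp : Module.finrank ℝ E < p) {v : E → ℝ}
    (hv : Measurable v) {M : ℝ} (hM : ∀ y, |v y| ≤ M) (x : E) {δ : ℝ} (hδ : 0 < δ) :
    IntegrableOn (fun y => (v x - v y) / dist x y ^ p) {y | δ ≤ dist x y} μ := by
  have hbdd : ∀ y, ‖v x - v y‖ ≤ M + M := fun y =>
    (norm_sub_le _ _).trans (add_le_add (hM x) (hM y))
  refine ((integrableOn_dist_rpow_neg μ hp x hδ).bdd_mul (c := M + M)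
    (by fun_prop) (.of_forall hbdd)).congr (.of_forall fun y => ?_)
  simp only [div_eq_mul_inv, Real.rpow_neg dist_nonneg]

variable [Nontrivial E]

theorem integrable_levyWeight (hp : Module.finrank ℝ E < p) (hp' : p < Module.finrank ℝ E + 2) :
    Integrable (levyWeight p) μ := by
  have hmeas : Measurable (levyWeight (E := E) p) := by unfold levyWeight; fun_prop
  have hnear : IntegrableOn (levyWeight p) (ball 0 1) μ := by
    refine integrableOn_ball_of_norm_le_rpow (C := 1) (α := p - 2) Module.finrank_pos (by linarith)
      ?_ hmeas.aestronglyMeasurable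
    filter_upwards [ae_restrict_of_ae (Measure.ae_ne μ 0)] with z hz
    have hz0 : 0 < ‖z‖ := norm_pos_iff.2 hz
    rw [Real.norm_of_nonneg (levyWeight_nonneg p z), one_mul, neg_sub, Real.rpow_sub hz0,
      Real.rpow_two]
    exact div_le_div_of_nonneg_right (min_le_right _ _) (by positivity)
  have hfar : IntegrableOn (levyWeight p) {z | 1 ≤ dist 0 z} μ := by
    refine (integrableOn_dist_rpow_neg μ hp 0 one_pos).mono' hmeas.aestronglyMeasurable
      (.of_forall fun z => ?_)
    rw [Real.norm_of_nonneg (levyWeight_nonneg p z), dist_zero_left,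
      Real.rpow_neg (norm_nonneg z), ← one_div]
    exact div_le_div_of_nonneg_right (min_le_left _ _) (by positivity)
  rw [← integrableOn_univ]
  refine (hnear.union hfar).mono_set fun z _ => ?_
  simpa using lt_or_ge ‖z‖ 1

theorem setIntegral_levyWeight_pos (hp : Module.finrank ℝ E < p)
    (hp' : p < Module.finrank ℝ E + 2) {A : Set E} (hA : IsOpen A) (hne : A.Nonempty) :
    0 < ∫ z in A, levyWeight p z ∂μ := by
  rw [setIntegral_pos_iff_support_of_nonneg_ae (.of_forall (levyWeight_nonneg p))
    (integrable_levyWeight μ hp hp').integrableOn]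
  have hsub : A \ {0} ⊆ Function.support (levyWeight p) ∩ A := fun z hz =>
    ⟨(levyWeight_pos p hz.2).ne', hz.1⟩
  refine lt_of_lt_of_le ?_ (measure_mono hsub)
  rw [measure_sdiff_null (measure_singleton 0)]
  exact hA.measure_pos μ hne

end LevyWeight

section SecondDifference

variable {E : Type*} [NormedAddCommGroup E]

/-- The negated symmetric second difference of `v` at `x`, whose integral against
`‖z‖ ^ (-n - 2s)` is twice the principal value defining `(-Δ)^s v x`. -/
def secondDifference (v : E → ℝ) (x z : E) : ℝ := 2 * v x - v (x + z) - v (x - z)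

variable [NormedSpace ℝ E] [FiniteDimensional ℝ E] [MeasurableSpace E] [BorelSpace E]
  (μ : Measure E) [μ.IsAddHaarMeasure] {p : ℝ}

open Pointwise in
theorem setIntegral_comp_add_smul (g : E → ℝ) (a : E) {r : ℝ} (hr : 0 < r) (S : Set E) :
    ∫ y in (fun y => a + r • y) ⁻¹' S, g (a + r • y) ∂μ =
      (r ^ Module.finrank ℝ E)⁻¹ * ∫ y in S, g y ∂μ := by
  have himage : r • ((fun y => a + r • y) ⁻¹' S) = (a + ·) ⁻¹' S := by
    ext y
    simp [mem_smul_set_iff_inv_smul_mem₀ hr.ne', smul_inv_smul₀ hr.ne']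
  rw [Measure.setIntegral_comp_smul_of_pos μ (fun y => g (a + y)) _ hr, himage, smul_eq_mul,
    (measurePreserving_add_left μ a).setIntegral_preimage_emb (measurableEmbedding_addLeft a)]

theorem aecover_le_norm [Nontrivial E] :
    AECover μ (nhdsWithin 0 (Ioi 0)) fun δ : ℝ => {z : E | δ ≤ ‖z‖} where
  ae_eventually_mem := by
    filter_upwards [Measure.ae_ne μ (0 : E)] with z hz
    filter_upwards [Ioc_mem_nhdsGT (norm_pos_iff.2 hz)] with δ hδ using hδ.2
  measurableSet δ := measurableSet_le measurable_const measurable_norm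

theorem setIntegral_sub_div_dist_rpow (hp : Module.finrank ℝ E < p) {v : E → ℝ}
    (hv : Measurable v) {M : ℝ} (hM : ∀ y, |v y| ≤ M) (x : E) {δ : ℝ} (hδ : 0 < δ) :
    IntegrableOn (fun z => secondDifference v x z / ‖z‖ ^ p) {z | δ ≤ ‖z‖} μ ∧
      ∫ y in {y | δ ≤ dist x y}, (v x - v y) / dist x y ^ p ∂μ =
        1 / 2 * ∫ z in {z | δ ≤ ‖z‖}, secondDifference v x z / ‖z‖ ^ p ∂μ := by
  set F : E → ℝ := fun z => (v x - v (x + z)) / ‖z‖ ^ p with hF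
  have hFint : IntegrableOn F {z | δ ≤ ‖z‖} μ := by
    simpa using integrableOn_sub_div_dist_rpow μ hp (v := fun z => v (x + z)) (by fun_prop)
      (fun z => hM _) 0 hδ
  have hneg := Measure.measurePreserving_neg μ
  have hemb : MeasurableEmbedding (Neg.neg : E → E) := (MeasurableEquiv.neg E).measurableEmbedding
  have hSneg : Neg.neg ⁻¹' {z : E | δ ≤ ‖z‖} = {z | δ ≤ ‖z‖} := by ext; simp
  have hFneg : IntegrableOn (fun z => F (-z)) {z | δ ≤ ‖z‖} μ := by
    rw [← hSneg]; exact (hneg.integrableOn_comp_preimage hemb).2 hFint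
  have hsum : (fun z => secondDifference v x z / ‖z‖ ^ p) = fun z => F z + F (-z) := by
    ext z
    simp only [hF, secondDifference, norm_neg, ← sub_eq_add_neg]
    ring
  have hshift : ∫ y in {y | δ ≤ dist x y}, (v x - v y) / dist x y ^ p ∂μ =
      ∫ z in {z | δ ≤ ‖z‖}, F z ∂μ := by
    simpa using (setIntegral_comp_add_smul μ (fun y => (v x - v y) / dist x y ^ p) x one_pos
      {y | δ ≤ dist x y}).symm
  have hrefl : ∫ z in {z | δ ≤ ‖z‖}, F (-z) ∂μ = ∫ z in {z | δ ≤ ‖z‖}, F z ∂μ := by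
    simpa only [hSneg] using hneg.setIntegral_preimage_emb hemb F {z | δ ≤ ‖z‖}
  rw [hsum]
  refine ⟨hFint.add hFneg, ?_⟩
  rw [hshift, integral_add hFint hFneg, hrefl]
  ring

end SecondDifference

section PerturbedMaximum

/-- A bump whose perturbation of a bounded function forces an attained maximum. It is only
Lipschitz, but its kinks are convex, so its second differences are one-sidedly quadratic. -/
def paraboloidBump {E : Type*} [NormedAddCommGroup E] (y : E) : ℝ := max (1 - ‖y‖ ^ 2) 0

variable {E : Type*} [NormedAddCommGroup E]

theorem paraboloidBump_zero : paraboloidBump (0 : E) = 1 := by simp [paraboloidBump]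

theorem paraboloidBump_of_norm_le_one {b : E} (hb : ‖b‖ ≤ 1) :
    paraboloidBump b = 1 - ‖b‖ ^ 2 :=
  max_eq_left (sub_nonneg.2 (pow_le_one₀ (norm_nonneg b) hb))

theorem paraboloidBump_of_one_le_norm {y : E} (hy : 1 ≤ ‖y‖) : paraboloidBump y = 0 :=
  max_eq_right (sub_nonpos.2 (one_le_pow₀ hy))

theorem paraboloidBump_nonneg (y : E) : 0 ≤ paraboloidBump y := le_max_right _ _

theorem paraboloidBump_le_one (y : E) : paraboloidBump y ≤ 1 :=
  max_le (sub_le_self _ (sq_nonneg _)) zero_le_one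

theorem continuous_paraboloidBump : Continuous (paraboloidBump : E → ℝ) := by
  unfold paraboloidBump; fun_prop

theorem exists_add_paraboloidBump_max [ProperSpace E] {v : E → ℝ} (hv : Continuous v) {ε : ℝ}
    (hle : ∀ y, v y ≤ v 0 + ε) :
    ∃ b : E, ‖b‖ ≤ 1 ∧
      ∀ y, v y + ε * paraboloidBump y ≤ v b + ε * paraboloidBump b := by
  have hcont : Continuous fun y => v y + ε * paraboloidBump y :=
    hv.add (continuous_const.mul continuous_paraboloidBump)
  obtain ⟨b, hb, hmax⟩ := (isCompact_closedBall (0 : E) 1).exists_isMaxOn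
    ⟨0, by simp⟩ hcont.continuousOn
  refine ⟨b, by simpa using hb, fun y => ?_⟩
  rcases le_total ‖y‖ 1 with hy | hy
  · exact hmax (by simpa using hy)
  · calc v y + ε * paraboloidBump y
        ≤ v 0 + ε * paraboloidBump 0 := by
          simpa [paraboloidBump_of_one_le_norm hy, paraboloidBump_zero] using hle y
      _ ≤ v b + ε * paraboloidBump b := hmax (by simp)

variable [InnerProductSpace ℝ E]

theorem secondDifference_paraboloidBump_le {b : E} (hb : ‖b‖ ≤ 1) (z : E) :
    secondDifference paraboloidBump b z ≤ 2 * min 1 (‖z‖ ^ 2) := by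
  have hpar := parallelogram_law_with_norm ℝ b z
  have hplus : 1 - ‖b + z‖ ^ 2 ≤ paraboloidBump (b + z) := le_max_left _ _
  have hminus : 1 - ‖b - z‖ ^ 2 ≤ paraboloidBump (b - z) := le_max_left _ _
  unfold secondDifference
  rw [mul_min_of_nonneg _ _ zero_le_two, le_min_iff]
  constructor
  · linarith [paraboloidBump_le_one b, paraboloidBump_nonneg (b + z),
      paraboloidBump_nonneg (b - z)]
  · rw [paraboloidBump_of_norm_le_one hb]
    linarith

theorem exists_secondDifference_ge_of_almost_max [ProperSpace E] {v : E → ℝ} (hv : Continuous v)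
    {ε : ℝ} (hle : ∀ y, v y ≤ v 0 + ε) :
    ∃ b : E, ‖b‖ ≤ 1 ∧ v 0 ≤ v b ∧
      ∀ z, -(2 * ε) * min 1 (‖z‖ ^ 2) ≤ secondDifference v b z := by
  have hε : 0 ≤ ε := by linarith [hle 0]
  obtain ⟨b, hb, hmax⟩ := exists_add_paraboloidBump_max hv hle
  refine ⟨b, hb, ?_, fun z => ?_⟩
  · have hmax0 := hmax 0
    rw [paraboloidBump_zero] at hmax0
    linarith [mul_le_mul_of_nonneg_left (paraboloidBump_le_one b) hε]
  · have hbump := mul_le_mul_of_nonneg_left (secondDifference_paraboloidBump_le hb z) hε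
    unfold secondDifference at hbump ⊢
    linarith [hmax (b + z), hmax (b - z)]

end PerturbedMaximum

theorem finrank_lt_add_two_mul {n : ℕ} {s : ℝ} (hs : 0 < s) :
    Module.finrank ℝ (Pt n) < (n : ℝ) + 2 * s := by
  simpa using hs

theorem add_two_mul_lt_finrank_add_two {n : ℕ} {s : ℝ} (hs : s < 1) :
    (n : ℝ) + 2 * s < Module.finrank ℝ (Pt n) + 2 := by
  simpa using hs

namespace HasFracLap

variable {n : ℕ} {s C L L' : ℝ} {v w : Pt n → ℝ} {x : Pt n}

theorem comp_add_smul {a : Pt n} {r : ℝ} (hr : 0 < r) (h : HasFracLap n s C v (a + r • x) L) :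
    HasFracLap n s C (fun y => v (a + r • y)) x (r ^ (2 * s) * L) := by
  have hscale : Tendsto (r * ·) (nhdsWithin 0 (Ioi 0)) (nhdsWithin 0 (Ioi 0)) :=
    tendsto_nhdsWithin_iff.2 ⟨((continuous_const_mul r).tendsto' 0 0 (mul_zero r)).mono_left
      nhdsWithin_le_nhds, eventually_mem_nhdsWithin.mono fun _ hε => mul_pos hr hε⟩
  refine ((h.comp hscale).const_mul (r ^ (2 * s))).congr fun ε => ?_
  have hdist (y : Pt n) : dist (a + r • x) (a + r • y) = r * dist x y := by
    rw [dist_add_left, dist_smul₀, Real.norm_of_nonneg hr.le]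
  have hset : {y | ε ≤ dist x y} =
      (fun y => a + r • y) ⁻¹' {y | r * ε ≤ dist (a + r • x) y} := by
    ext y; simp [hdist, hr]
  have hintegrand (y : Pt n) :
      (v (a + r • x) - v (a + r • y)) / dist x y ^ ((n : ℝ) + 2 * s) =
        r ^ ((n : ℝ) + 2 * s) *
          ((v (a + r • x) - v (a + r • y)) / dist (a + r • x) (a + r • y) ^ ((n : ℝ) + 2 * s)) := by
    rw [hdist, Real.mul_rpow hr.le dist_nonneg, ← mul_div_assoc,
      mul_div_mul_left _ _ (by positivity)]
  have hpow : r ^ ((n : ℝ) + 2 * s) * (r ^ n)⁻¹ = r ^ (2 * s) := by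
    rw [Real.rpow_add hr, Real.rpow_natCast]
    field_simp
  simp only [hintegrand, hset, integral_const_mul, Function.comp_apply]
  rw [setIntegral_comp_add_smul volume
    (fun y => (v (a + r • x) - v y) / dist (a + r • x) y ^ ((n : ℝ) + 2 * s)) a hr,
    finrank_euclideanSpace_fin, ← hpow]
  ring

theorem comp_add_right {t : Pt n} (h : HasFracLap n s C v (x + t) L) :
    HasFracLap n s C (fun y => v (y + t)) x L := by
  rw [add_comm] at h
  simpa [add_comm] using comp_add_smul (a := t) (r := 1) one_pos (by simpa using h)

theorem sub (hs : 0 < s) (hv : Measurable v) (hw : Measurable w) {M N : ℝ}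
    (hM : ∀ y, |v y| ≤ M) (hN : ∀ y, |w y| ≤ N)
    (h : HasFracLap n s C v x L) (h' : HasFracLap n s C w x L') :
    HasFracLap n s C (fun y => v y - w y) x (L - L') := by
  refine (Tendsto.sub h h').congr' ?_
  filter_upwards [self_mem_nhdsWithin] with δ hδ
  rw [← mul_sub, ← integral_sub
    (integrableOn_sub_div_dist_rpow volume (finrank_lt_add_two_mul hs) hv hM x hδ)
    (integrableOn_sub_div_dist_rpow volume (finrank_lt_add_two_mul hs) hw hN x hδ)]
  congr 2
  ext y
  ring

theorem half_integral_le [Nontrivial (Pt n)] (hs : 0 < s) (hC : 0 ≤ C) (hv : Measurable v)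
    {M : ℝ} (hM : ∀ y, |v y| ≤ M) (h : HasFracLap n s C v x L) {g : Pt n → ℝ}
    (hg : Integrable g) (hle : ∀ z, g z ≤ secondDifference v x z / ‖z‖ ^ ((n : ℝ) + 2 * s)) :
    C * (1 / 2 * ∫ z, g z) ≤ L := by
  have hlim := (aecover_le_norm volume).integral_tendsto_of_countably_generated hg
  refine le_of_tendsto_of_tendsto ((hlim.const_mul (1 / 2)).const_mul C) h ?_
  filter_upwards [self_mem_nhdsWithin] with δ hδ
  obtain ⟨hint, heq⟩ :=
    setIntegral_sub_div_dist_rpow volume (finrank_lt_add_two_mul hs) hv hM x (mem_Ioi.1 hδ)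
  rw [heq]
  exact mul_le_mul_of_nonneg_left (mul_le_mul_of_nonneg_left
    (setIntegral_mono hg.integrableOn hint hle) one_half_pos.le) hC

theorem levyWeight_le [Nontrivial (Pt n)] (hs : s ∈ Ioo 0 1) (hC : 0 ≤ C) (hv : Measurable v)
    {M : ℝ} (hM : ∀ y, |v y| ≤ M) (h : HasFracLap n s C v x L) {A : Set (Pt n)}
    (hA : MeasurableSet A) {a c : ℝ}
    (hle : ∀ z, (A.indicator (fun _ => c) z - a) * min 1 (‖z‖ ^ 2) ≤ secondDifference v x z) :
    C * (1 / 2 * (c * (∫ z in A, levyWeight ((n : ℝ) + 2 * s) z) -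
      a * ∫ z : Pt n, levyWeight ((n : ℝ) + 2 * s) z)) ≤ L := by
  set ω : Pt n → ℝ := levyWeight ((n : ℝ) + 2 * s)
  have hω : Integrable ω := integrable_levyWeight volume (finrank_lt_add_two_mul hs.1)
    (add_two_mul_lt_finrank_add_two hs.2)
  have hωA : Integrable (A.indicator ω) := hω.indicator hA
  rw [← integral_indicator hA, ← integral_const_mul, ← integral_const_mul,
    ← integral_sub (hωA.const_mul c) (hω.const_mul a)]
  refine h.half_integral_le hs.1 hC hv hM ((hωA.const_mul c).sub (hω.const_mul a)) fun z => ?_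
  calc c * A.indicator ω z - a * ω z
      = (A.indicator (fun _ => c) z - a) * min 1 (‖z‖ ^ 2) / ‖z‖ ^ ((n : ℝ) + 2 * s) := by
        by_cases hz : z ∈ A <;> simp [ω, levyWeight, hz] <;> ring
    _ ≤ secondDifference v x z / ‖z‖ ^ ((n : ℝ) + 2 * s) := by gcongr; exact hle z

theorem eq_of_forall_le_of_nonpos (hs : s ∈ Ioo 0 1) (hC : 0 < C) (hv : Continuous v) {M : ℝ}
    (hM : ∀ y, |v y| ≤ M) (hmax : ∀ y, v y ≤ v x) (h : HasFracLap n s C v x L) (hL : L ≤ 0)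
    (y : Pt n) : v y = v x := by
  by_contra hne
  have : Nontrivial (Pt n) := ⟨y, x, ne_of_apply_ne v hne⟩
  obtain ⟨q, hyq, hqx⟩ := exists_between (lt_of_le_of_ne (hmax y) hne)
  have hAo : IsOpen {z | v (x + z) < q} := isOpen_lt (by fun_prop) continuous_const
  have hlower : C * (1 / 2 * ((v x - q) * (∫ z in {z | v (x + z) < q}, levyWeight (n + 2 * s) z) -
      0 * ∫ z : Pt n, levyWeight (n + 2 * s) z)) ≤ L := by
    refine h.levyWeight_le hs hC.le hv.measurable hM hAo.measurableSet fun z => ?_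
    have hplus := hmax (x + z)
    have hminus := hmax (x - z)
    unfold secondDifference
    rw [sub_zero]
    by_cases hz : v (x + z) < q
    · have hmin : (v x - q) * min 1 (‖z‖ ^ 2) ≤ v x - q :=
        mul_le_of_le_one_right (by linarith) (min_le_left _ _)
      rw [indicator_of_mem (by exact hz)]
      linarith
    · rw [indicator_of_notMem (by exact hz), zero_mul]
      linarith
  have hκ := setIntegral_levyWeight_pos volume (finrank_lt_add_two_mul hs.1)
    (add_two_mul_lt_finrank_add_two hs.2) hAo ⟨y - x, by simpa using hyq⟩
  have : 0 < C * (1 / 2 * ((v x - q) * ∫ z in {z | v (x + z) < q}, levyWeight (n + 2 * s) z)) := by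
    have := sub_pos.2 hqx
    positivity
  rw [zero_mul, sub_zero] at hlower
  linarith

theorem exists_lower_bound_of_almost_max [Nontrivial (Pt n)] (hs : s ∈ Ioo 0 1) (hC : 0 ≤ C)
    (hv : Continuous v) {M : ℝ} (hM : ∀ y, |v y| ≤ M) {m ε : ℝ} (hle : ∀ y, v y ≤ m)
    (h0 : m - ε ≤ v 0) {A : Set (Pt n)} (hA : MeasurableSet A) (hA1 : ∀ z ∈ A, 1 ≤ ‖z‖)
    (hnonpos : ∀ b : Pt n, ‖b‖ ≤ 1 → ∀ z ∈ A, v (b + z) ≤ 0) :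
    ∃ b : Pt n, m - ε ≤ v b ∧ ∀ L, HasFracLap n s C v b L →
      C * (1 / 2 * (m * (∫ z in A, levyWeight ((n : ℝ) + 2 * s) z) -
        2 * ε * ∫ z : Pt n, levyWeight ((n : ℝ) + 2 * s) z)) ≤ L := by
  obtain ⟨b, hb, hvb, hsecond⟩ :=
    exists_secondDifference_ge_of_almost_max hv (ε := ε) fun y => by linarith [hle y]
  refine ⟨b, h0.trans hvb, fun L hL => hL.levyWeight_le hs hC hv.measurable hM hA fun z => ?_⟩
  by_cases hz : z ∈ A
  · rw [indicator_of_mem hz, min_eq_left (one_le_pow₀ (hA1 z hz)), mul_one]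
    unfold secondDifference
    linarith [hnonpos b hb z hz, hle (b - z)]
  · rw [indicator_of_notMem hz, zero_sub]
    exact hsecond z

end HasFracLap

section ContinuousLinearFunctional

variable {E : Type*} [NormedAddCommGroup E] [NormedSpace ℝ E] (ℓ : E →L[ℝ] ℝ)

theorem one_le_norm_of_apply_lt {z : E} (hz : ℓ z < -(1 + ‖ℓ‖)) : 1 ≤ ‖z‖ := by
  by_contra! hlt
  have hneg : -ℓ z ≤ ‖ℓ‖ * ‖z‖ := (neg_le_abs _).trans (ℓ.le_opNorm z)
  linarith [mul_le_of_le_one_right (norm_nonneg ℓ) hlt.le]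

theorem apply_add_smul_nonpos {a b z : E} (ha : 0 ≤ ℓ a) (hb : ‖b‖ ≤ 1)
    (hz : ℓ z < -(1 + ‖ℓ‖)) : ℓ (a + ℓ a • (b + z)) ≤ 0 := by
  have hℓb : ℓ b ≤ ‖ℓ‖ :=
    (le_abs_self _).trans ((ℓ.le_opNorm b).trans (mul_le_of_le_one_right (norm_nonneg ℓ) hb))
  have hfactor : ℓ (a + ℓ a • (b + z)) = ℓ a * (1 + ℓ b + ℓ z) := by
    simp only [map_add, map_smul, smul_eq_mul]
    ring
  rw [hfactor]
  exact mul_nonpos_of_nonneg_of_nonpos ha (by linarith)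

end ContinuousLinearFunctional

section HalfSpace

variable {n : ℕ} {s C : ℝ} {w : Pt n → ℝ}

theorem nonpos_of_hasFracLap_nonpos (hs : s ∈ Ioo 0 1) (hC : 0 < C) (hw : Continuous w) {M : ℝ}
    (hM : ∀ y, |w y| ≤ M) (ℓ : Pt n →L[ℝ] ℝ) (hout : ∀ y, ℓ y ≤ 0 → w y ≤ 0)
    (hlap : ∀ y, 0 < w y → ∃ L ≤ 0, HasFracLap n s C w y L) (x : Pt n) : w x ≤ 0 := by
  by_contra! hx
  have hpos (y : Pt n) (hy : 0 < w y) : 0 < ℓ y := not_le.1 fun h => (hout y h).not_gt hy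
  have hℓ : (ℓ : Pt n →ₗ[ℝ] ℝ) ≠ 0 := fun h => (hpos x hx).ne' (LinearMap.congr_fun h x)
  have : Nontrivial (Pt n) := ⟨x, 0, ne_of_apply_ne ℓ (by simpa using (hpos x hx).ne')⟩
  set A : Set (Pt n) := {z | ℓ z < -(1 + ‖ℓ‖)}
  have hAo : IsOpen A := isOpen_lt ℓ.continuous continuous_const
  have hAne : A.Nonempty := by
    obtain ⟨z, hz⟩ := LinearMap.surjective hℓ (-(1 + ‖ℓ‖) - 1)
    exact ⟨z, hz.trans_lt (sub_one_lt _)⟩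
  have hκ := setIntegral_levyWeight_pos volume (finrank_lt_add_two_mul hs.1)
    (add_two_mul_lt_finrank_add_two hs.2) hAo hAne
  set κ := ∫ z in A, levyWeight ((n : ℝ) + 2 * s) z
  set K := ∫ z : Pt n, levyWeight ((n : ℝ) + 2 * s) z
  have hK : 0 ≤ K := integral_nonneg (levyWeight_nonneg _)
  have hbdd : BddAbove (range w) := ⟨M, forall_mem_range.2 fun y => (le_abs_self _).trans (hM y)⟩
  set m := ⨆ y, w y
  have hm : 0 < m := hx.trans_le (le_ciSup hbdd x)
  obtain ⟨ε, hε, hεm⟩ := exists_pos_mul_lt (mul_pos hm hκ) (2 * K + κ)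
  have hKε : 0 ≤ K * ε := mul_nonneg hK hε.le
  have hκε : 0 < κ * ε := mul_pos hκ hε
  have hεlt : ε < m := lt_of_mul_lt_mul_left (by linarith) hκ.le
  obtain ⟨a, ha⟩ := exists_lt_of_lt_ciSup (sub_lt_self m hε)
  have hapos : 0 < ℓ a := hpos a (by linarith)
  -- After rescaling by the height of `a`, the set `A`, whose weight does not depend on `a`, sees
  -- only values `≤ 0`.
  obtain ⟨b, hwb, hlower⟩ := HasFracLap.exists_lower_bound_of_almost_max (n := n) (s := s)
    (v := fun z => w (a + ℓ a • z)) hs hC.le (by fun_prop) (fun z => hM _) (m := m) (ε := ε)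
    (fun z => le_ciSup hbdd _) (by simpa using ha.le) hAo.measurableSet
    (fun _ hz => one_le_norm_of_apply_lt ℓ hz)
    (fun _ hb _ hz => hout _ (apply_add_smul_nonpos ℓ hapos.le hb hz))
  obtain ⟨L, hL, hlapb⟩ := hlap (a + ℓ a • b) (by linarith)
  have hbound := hlower _ (hlapb.comp_add_smul hapos)
  have hneg : ℓ a ^ (2 * s) * L ≤ 0 := mul_nonpos_of_nonneg_of_nonpos (by positivity) hL
  have hgap : 0 < C * (1 / 2 * (m * κ - 2 * ε * K)) :=
    mul_pos hC (mul_pos one_half_pos (by linarith))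
  linarith

variable {f : ℝ → ℝ} {u : Pt n → ℝ} {M : ℝ} {ℓ : Pt n →L[ℝ] ℝ}

theorem hasFracLap_sub_comp_add (hs : 0 < s) (hu : Measurable u) (hM : ∀ x, |u x| ≤ M)
    (heq : ∀ x, 0 < ℓ x → HasFracLap n s C u x (f (u x))) {t : Pt n} (ht : 0 ≤ ℓ t) {x : Pt n}
    (hx : 0 < ℓ x) :
    HasFracLap n s C (fun y => u y - u (y + t)) x (f (u x) - f (u (x + t))) :=
  (heq x hx).sub hs hu (by fun_prop) hM (fun _ => hM _)
    (heq (x + t) (by rw [map_add]; linarith)).comp_add_right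

theorem le_comp_add_of_hasFracLap (hs : s ∈ Ioo 0 1) (hC : 0 < C) (hf : Antitone f)
    (hu : Continuous u) (hM : ∀ x, |u x| ≤ M)
    (heq : ∀ x, 0 < ℓ x → HasFracLap n s C u x (f (u x))) (hnonneg : ∀ x, 0 ≤ u x)
    (hzero : ∀ x, ¬ 0 < ℓ x → u x = 0) {t : Pt n} (ht : 0 ≤ ℓ t) (x : Pt n) :
    u x ≤ u (x + t) := by
  have hout (y : Pt n) (hy : ℓ y ≤ 0) : u y - u (y + t) ≤ 0 := by
    rw [hzero y hy.not_gt]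
    linarith [hnonneg (y + t)]
  refine sub_nonpos.1 (nonpos_of_hasFracLap_nonpos hs hC (w := fun y => u y - u (y + t))
    (by fun_prop) (M := M + M) (fun y => (abs_sub _ _).trans (add_le_add (hM _) (hM _))) ℓ hout
    (fun y hy => ⟨_, sub_nonpos.2 (hf ?_), hasFracLap_sub_comp_add hs.1 hu.measurable hM heq ht ?_⟩)
    x)
  · exact (sub_pos.1 hy).le
  · exact not_le.1 fun h => (hout y h).not_gt hy

theorem monotonicity_half_space_general (hs : s ∈ Ioo 0 1) (hC : 0 < C) (hf : Antitone f)
    (hcont : ContinuousOn u (closure {x | 0 < ℓ x})) (hbdd : ∃ M : ℝ, ∀ x, |u x| ≤ M)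
    (heq : ∀ x, 0 < ℓ x → HasFracLap n s C u x (f (u x)))
    (hpos : ∀ x, 0 < ℓ x → 0 < u x) (hzero : ∀ x, ¬ 0 < ℓ x → u x = 0)
    {x y : Pt n} (hy : 0 < ℓ y) (hxy : ℓ x < ℓ y) : u x < u y := by
  obtain ⟨M, hM⟩ := hbdd
  have hu : Continuous u := continuous_of_continuousOn_closure_of_continuousOn_compl
    (isOpen_lt continuous_const ℓ.continuous) hcont (continuousOn_const.congr hzero)
  have hnonneg (z : Pt n) : 0 ≤ u z :=
    (em (0 < ℓ z)).elim (fun h => (hpos z h).le) fun h => (hzero z h).ge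
  rcases le_or_gt (ℓ x) 0 with hx | hx
  · exact (hzero x hx.not_gt).trans_lt (hpos y hy)
  obtain ⟨t, rfl⟩ : ∃ t, y = x + t := ⟨y - x, (add_sub_cancel x y).symm⟩
  have ht : 0 < ℓ t := by simpa using hxy
  have hle := le_comp_add_of_hasFracLap hs hC hf hu hM heq hnonneg hzero ht.le
  refine lt_of_le_of_ne (hle x) fun hxt => ?_
  have hlap : HasFracLap n s C (fun z => u z - u (z + t)) x 0 := by
    simpa [← hxt] using hasFracLap_sub_comp_add hs.1 hu.measurable hM heq ht.le hx
  have hconst := hlap.eq_of_forall_le_of_nonpos hs hC (by fun_prop) (M := M + M)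
    (fun z => (abs_sub _ _).trans (add_le_add (hM _) (hM _)))
    (fun z => by simpa [← hxt] using hle z) le_rfl (x - (ℓ x / ℓ t) • t)
  have hboundary : ℓ (x - (ℓ x / ℓ t) • t) = 0 := by
    simp [div_mul_cancel₀ _ ht.ne']
  have hu0 := hzero _ hboundary.not_gt
  have hut := hpos (x - (ℓ x / ℓ t) • t + t) (by rw [map_add, hboundary, zero_add]; exact ht)
  simp only [← hxt, sub_self, hu0] at hconst
  linarith

end HalfSpace

/-- Monotonicity in the half space. -/
theorem monotonicity_half_space
    (n : ℕ) (hn : 0 < n) (s : ℝ) (hs : s ∈ Set.Ioo (0 : ℝ) 1) (Cns : ℝ) (hCns : 0 < Cns)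
    (f : ℝ → ℝ) (hf : Antitone f)
    (u : Pt n → ℝ) (huL : MemL2s n s u)
    (huC : C11loc n u {x : Pt n | 0 < x (lastIdx n hn)})
    (hucont : ContinuousOn u (closure {x : Pt n | 0 < x (lastIdx n hn)}))
    (hubdd : ∃ M : ℝ, ∀ x : Pt n, |u x| ≤ M)
    (heq : ∀ x : Pt n, 0 < x (lastIdx n hn) → HasFracLap n s Cns u x (f (u x)))
    (hpos : ∀ x : Pt n, 0 < x (lastIdx n hn) → 0 < u x)
    (hzero : ∀ x : Pt n, ¬ 0 < x (lastIdx n hn) → u x = 0) :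
    ∀ x : Pt n, 0 < x (lastIdx n hn) → ∀ τ : ℝ, 0 < τ →
      u x < u (x + τ • eN n hn) := by
  intro x hx τ hτ
  exact monotonicity_half_space_general (ℓ := EuclideanSpace.proj (lastIdx n hn)) hs hCns hf hucont
    hubdd heq hpos hzero (by simpa [eN] using add_pos hx hτ) (by simpa [eN] using hτ)
end
end
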